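/- arXiv:2102.09213 — 3 statements merged into one kernel-verified Lean document; each statement's English description precedes it below -/
import Mathlib

section
/- Let q be the Lorentzian quadratic form q(x) = 2x₁x₃ + x₂² on ℝ³ and let ρ be a continuous representation of O(1,2) on a finite-dimensional real normed vector space V. For s ∈ ℝ let a^s ∈ O(1,2) be defined by a^s e₁ = e^s e₁, a^s e₂ = e₂, a^s e₃ = e^{−s} e₃, and for t ∈ ℝ let n(t) ∈ O(1,2) be defined by n(t)(x₁,x₂,x₃) = (x₁ + t x₂ − (t²/2) x₃, x₂ − t x₃, x₃). Let V⁻ = {v ∈ V : the set {ρ(a^s)v : s ≥ 0} is bounded}. Let t₁, t₂, t₃ be three pairwise distinct real numbers. Then every vector v ∈ ρ(n(t₁))(V⁻) ∩ ρ(n(t₂))(V⁻) ∩ ρ(n(t₃))(V⁻) is fixed by the identity component of O(1,2): ρ(g)v = v for every g in the connected component of the identity in O(1,2). -/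
open Matrix Filter Topology Bornology

noncomputable section

/-- The Lorentzian quadratic form `q(x) = 2 x₁ x_{n+1} + x₂² + ⋯ + xₙ²` on `ℝ^{n+1}`
(coordinates indexed by `Fin (n+1)`, so `x₁` is `x 0` and `x_{n+1}` is `x (Fin.last n)`). -/
def lorQ (n : ℕ) (x : Fin (n + 1) → ℝ) : ℝ :=
  2 * x 0 * x (Fin.last n) +
    ∑ i : Fin (n + 1), if i ≠ 0 ∧ i ≠ Fin.last n then x i ^ 2 else 0

/-- The polar bilinear form `B` of `lorQ`. -/
def lorB (n : ℕ) (x y : Fin (n + 1) → ℝ) : ℝ :=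
  x 0 * y (Fin.last n) + x (Fin.last n) * y 0 +
    ∑ i : Fin (n + 1), if i ≠ 0 ∧ i ≠ Fin.last n then x i * y i else 0

/-- The Lorentz group `O(1,n)`: linear automorphisms of `ℝ^{n+1}` preserving `lorQ`. -/
def LorentzGrp (n : ℕ) : Subgroup (GL (Fin (n + 1)) ℝ) where
  carrier := {g | ∀ x, lorQ n ((g : Matrix (Fin (n + 1)) (Fin (n + 1)) ℝ).mulVec x) = lorQ n x}
  one_mem' := by intro x; simp
  mul_mem' := by
    intro a b ha hb x
    have h : ((a * b : GL (Fin (n + 1)) ℝ) : Matrix (Fin (n + 1)) (Fin (n + 1)) ℝ).mulVec x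
        = (a : Matrix (Fin (n + 1)) (Fin (n + 1)) ℝ).mulVec
            ((b : Matrix (Fin (n + 1)) (Fin (n + 1)) ℝ).mulVec x) := by
      rw [Matrix.mulVec_mulVec]; rfl
    rw [h, ha, hb]
  inv_mem' := by
    intro g hg x
    have h : (g : Matrix (Fin (n + 1)) (Fin (n + 1)) ℝ).mulVec
        ((↑g⁻¹ : Matrix (Fin (n + 1)) (Fin (n + 1)) ℝ).mulVec x) = x := by
      rw [Matrix.mulVec_mulVec]
      have : (g : Matrix (Fin (n + 1)) (Fin (n + 1)) ℝ) * (↑g⁻¹ : Matrix (Fin (n + 1)) (Fin (n + 1)) ℝ)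
          = (1 : Matrix (Fin (n + 1)) (Fin (n + 1)) ℝ) := by
        rw [← Units.val_mul, mul_inv_cancel, Units.val_one]
      rw [this, Matrix.one_mulVec]
    calc lorQ n ((↑g⁻¹ : Matrix (Fin (n + 1)) (Fin (n + 1)) ℝ).mulVec x)
        = lorQ n ((g : Matrix (Fin (n + 1)) (Fin (n + 1)) ℝ).mulVec
            ((↑g⁻¹ : Matrix (Fin (n + 1)) (Fin (n + 1)) ℝ).mulVec x)) := (hg _).symm
      _ = lorQ n x := by rw [h]

/-- The action of an element of `O(1,n)` on a vector of `ℝ^{n+1}`. -/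
def lorAct {n : ℕ} (g : LorentzGrp n) (x : Fin (n + 1) → ℝ) : Fin (n + 1) → ℝ :=
  ((g : GL (Fin (n + 1)) ℝ) : Matrix (Fin (n + 1)) (Fin (n + 1)) ℝ).mulVec x

/-- The base point `o = e₁ − e_{n+1}`, a timelike vector. -/
def basePt (n : ℕ) : Fin (n + 1) → ℝ := fun i =>
  if i = 0 then 1 else if i = Fin.last n then -1 else 0

/-- `u` is a limit direction of a subset `G` of `O(1,n)`: `u` is nonzero lightlike, and some
sequence `λ_k • g_k⁻¹(o)`, with `g_k ∈ G`, converges to `u`. -/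
def IsLimitDirection (n : ℕ) (G : Set (LorentzGrp n)) (u : Fin (n + 1) → ℝ) : Prop :=
  u ≠ 0 ∧ lorQ n u = 0 ∧
    ∃ (g : ℕ → LorentzGrp n) (lam : ℕ → ℝ), (∀ k, g k ∈ G) ∧
      Tendsto (fun k => lam k • lorAct (g k)⁻¹ (basePt n)) atTop (𝓝 u)

/-- A vector `v` is stable under `G ⊆ O(1,n)` if its `ρ`-orbit under `G` is bounded. -/
def IsStableVec {n : ℕ} {V : Type*} [NormedAddCommGroup V] [NormedSpace ℝ V]
    (ρ : LorentzGrp n →* (V →L[ℝ] V)) (G : Set (LorentzGrp n)) (v : V) : Prop :=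
  IsBounded {w : V | ∃ g ∈ G, w = ρ g v}

/-- `SO°(E)`: the identity component of the subgroup of `O(1,n)` of elements leaving `E`
invariant and fixing pointwise every vector orthogonal to `E`. -/
def SOIdComp (n : ℕ) (E : Submodule ℝ (Fin (n + 1) → ℝ)) : Set (LorentzGrp n) :=
  connectedComponentIn
    {g : LorentzGrp n |
      E.map ((g : GL (Fin (n + 1)) ℝ) : Matrix (Fin (n + 1)) (Fin (n + 1)) ℝ).mulVecLin = E ∧
      ∀ x : Fin (n + 1) → ℝ, (∀ e ∈ E, lorB n x e = 0) → lorAct g x = x} 1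

/-!
Let `w` be a Weyl element, `X` the nilpotent generator of `ρ (n t)`, and suppose `X ^ (D + 1)` kills
the orbit of `v`. From `a (2 log t) = w n(t⁻¹) w n(t) w n(t⁻¹)`, letting `t → ∞`, the map
`X ^ D ∘ ρ w` is a highest weight covector along the orbit: it is invariant under the opposite
unipotent group and scales by `c ^ D` under `a (2 log c)`. Hence `t ↦ X ^ D (ρ (w n(t)) v)` is a
polynomial of degree at most `D`; since `n(τ + ε) = a(log ε) n(1) a(-log ε) n(τ)`, it vanishes to
order at least `D / 2` at each `τ` for which `ρ (a s n(τ)) v` is bounded over `s ≥ 0`. Three such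
points force it to be zero if `D > 0`, and the Bruhat decomposition shows that `X ^ D` kills the
whole orbit.
Descending to `D = 0`, the orbit is killed by `X`, so `v` is fixed by the group generated by `w` and
the `n(t)`, which contains the big cell near `1` and therefore the identity component.
-/

section PolynomialVanishing

open Polynomial Asymptotics

theorem le_of_pow_isBigO_rpow_nhdsGT_zero {m : ℕ} {r : ℝ}
    (h : (fun x : ℝ => x ^ m) =O[𝓝[>] 0] fun x => x ^ r) : r ≤ m := by
  by_contra! hmr
  have hlim : Tendsto (fun x : ℝ => x ^ (r - m)) (𝓝[>] 0) (𝓝 0) := by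
    have := (Real.continuousAt_rpow_const 0 (r - m) (Or.inr (sub_nonneg.2 hmr.le))).tendsto
    rw [Real.zero_rpow (sub_pos.2 hmr).ne'] at this
    exact this.mono_left nhdsWithin_le_nhds
  have hone : (fun _ : ℝ => (1 : ℝ)) =O[𝓝[>] 0] fun x => x ^ (r - m) := by
    refine (h.mul (isBigO_refl (fun x : ℝ => (x ^ m)⁻¹) _)).congr' ?_ ?_ <;>
      filter_upwards [self_mem_nhdsWithin] with x (hx : 0 < x)
    · exact mul_inv_cancel₀ (pow_pos hx m).ne'
    · rw [Real.rpow_sub hx, Real.rpow_natCast, div_eq_mul_inv]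
  exact one_ne_zero (tendsto_nhds_unique tendsto_const_nhds (hone.trans_tendsto hlim))

theorem le_rootMultiplicity_of_isBigO {f : ℝ[X]} (hf : f ≠ 0) {τ r : ℝ}
    (h : (fun x => f.eval (τ + x)) =O[𝓝[>] 0] fun x => x ^ r) : r ≤ f.rootMultiplicity τ := by
  obtain ⟨g, hfg, hg⟩ := exists_eq_pow_rootMultiplicity_mul_and_not_dvd f hf τ
  have hgτ : g.eval (τ + 0) ≠ 0 := by
    rw [add_zero]
    exact fun h0 => hg (dvd_iff_isRoot.2 h0)
  have hone : (fun _ : ℝ => (1 : ℝ)) =O[𝓝[>] 0] fun x => g.eval (τ + x) :=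
    ((isBigO_const_left_iff_pos_le_norm one_ne_zero).2 <| by
      refine ⟨‖g.eval (τ + 0)‖ / 2, by positivity, ?_⟩
      have hcont : Continuous fun x => ‖g.eval (τ + x)‖ := by fun_prop
      exact (hcont.tendsto 0).eventually_const_le (half_lt_self (norm_pos_iff.2 hgτ))).mono
        nhdsWithin_le_nhds
  apply le_of_pow_isBigO_rpow_nhdsGT_zero
  refine ((isBigO_refl (fun x : ℝ => x ^ f.rootMultiplicity τ) _).mul hone).congr
    (fun x => mul_one _) (fun x => ?_) |>.trans h
  conv_rhs => rw [hfg]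
  simp

theorem sum_rootMultiplicity_le_natDegree {R : Type*} [CommRing R] [IsDomain R] (f : R[X])
    (S : Finset R) : ∑ τ ∈ S, f.rootMultiplicity τ ≤ f.natDegree := by
  classical
  calc ∑ τ ∈ S, f.rootMultiplicity τ
      = ∑ τ ∈ S, f.roots.count τ := by simp only [count_roots]
    _ ≤ ∑ τ ∈ S ∪ f.roots.toFinset, f.roots.count τ :=
        Finset.sum_le_sum_of_subset Finset.subset_union_left
    _ = f.roots.card := Multiset.sum_count_eq_card fun τ hτ =>
        Finset.mem_union_right _ (Multiset.mem_toFinset.2 hτ)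
    _ ≤ f.natDegree := f.card_roots'

theorem polynomial_eq_zero_of_isBigO {f : ℝ[X]} {S : Finset ℝ} {r : ℝ}
    (hdeg : f.natDegree < S.card * r)
    (h : ∀ τ ∈ S, (fun x => f.eval (τ + x)) =O[𝓝[>] 0] fun x => x ^ r) : f = 0 := by
  by_contra hf
  refine hdeg.not_ge ?_
  calc S.card * r = ∑ _τ ∈ S, r := by simp
    _ ≤ ∑ τ ∈ S, (f.rootMultiplicity τ : ℝ) :=
        Finset.sum_le_sum fun τ hτ => le_rootMultiplicity_of_isBigO hf (h τ hτ)
    _ ≤ f.natDegree := mod_cast sum_rootMultiplicity_le_natDegree f S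

end PolynomialVanishing

section OneParameterGroups

open NormedSpace

theorem isNilpotent_of_semiconjBy_smul {K A : Type*} [Field K] [Ring A] [Algebra K A]
    [FiniteDimensional K A] {b : Aˣ} {x : A} {c : K} (hc : Function.Injective fun k : ℕ => c ^ k)
    (h : SemiconjBy (b : A) x (c • x)) : IsNilpotent x := by
  by_contra hx
  let conj : Module.End K A :=
    LinearMap.mulLeft K (b : A) ∘ₗ LinearMap.mulRight K (↑b⁻¹ : A)
  have hconj (k : ℕ) : conj (x ^ k) = c ^ k • x ^ k := by
    have hk : (b : A) * x ^ k = c ^ k • x ^ k * b := by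
      simpa only [_root_.smul_pow] using (h.pow_right k).eq
    simp [conj, ← mul_assoc, hk]
  have hindep : LinearIndependent K fun k : ℕ => x ^ k :=
    Module.End.eigenvectors_linearIndependent' conj _ hc _ fun k =>
      ⟨Module.End.mem_eigenspace_iff.2 (hconj k), fun hk => hx ⟨k, hk⟩⟩
  have := hindep.finite
  exact not_finite ℕ

variable {A : Type*} [NormedRing A] [NormedAlgebra ℝ A] [CompleteSpace A]

theorem semiconjBy_of_forall_semiconjBy_exp {b x y : A}
    (h : ∀ t : ℝ, SemiconjBy b (exp (t • x)) (exp (t • y))) : SemiconjBy b x y := by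
  have hx := (hasDerivAt_exp_smul_const (𝕂 := ℝ) x 0).const_mul b
  have hy := (hasDerivAt_exp_smul_const (𝕂 := ℝ) y 0).mul_const b
  simp only [zero_smul, exp_zero, one_mul, (h _).eq] at hx hy
  exact hx.unique hy

theorem exists_isUnit_intervalIntegral {U : ℝ → A} (hU : Continuous U) (hU0 : U 0 = 1) :
    ∃ δ : ℝ, IsUnit (∫ s in 0..δ, U s) := by
  have hderiv : HasDerivAt (fun t => ∫ s in 0..t, U s) 1 0 :=
    hU0 ▸ intervalIntegral.integral_hasDerivAt_right (hU.intervalIntegrable _ _)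
      (hU.stronglyMeasurableAtFilter _ _) hU.continuousAt
  have hunit : ∀ᶠ δ in 𝓝[≠] (0 : ℝ), IsUnit (slope (fun t => ∫ s in 0..t, U s) 0 δ) :=
    hderiv.tendsto_slope.eventually (Units.nhds 1)
  obtain ⟨δ, hδ, hne⟩ := (hunit.and self_mem_nhdsWithin).exists
  refine ⟨δ, ?_⟩
  rw [slope_def_module, intervalIntegral.integral_same, sub_zero, sub_zero] at hδ
  exact (isUnit_smul_iff (Units.mk0 δ⁻¹ (inv_ne_zero hne)) _).1 hδ

-- The integral `K` of `U` over a short interval is invertible, and `U t * K` is the integral of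
-- `U` over a translated interval, which is differentiable in `t`.
theorem exists_hasDerivAt_of_continuous_of_map_add {U : ℝ → A} (hU : Continuous U)
    (hU0 : U 0 = 1) (hadd : ∀ s t, U (s + t) = U s * U t) :
    ∃ x : A, ∀ t, HasDerivAt U (U t * x) t := by
  obtain ⟨δ, K, hK⟩ := exists_isUnit_intervalIntegral hU hU0
  have hF (t : ℝ) : HasDerivAt (fun t => ∫ s in 0..t, U s) (U t) t :=
    intervalIntegral.integral_hasDerivAt_right (hU.intervalIntegrable _ _)
      (hU.stronglyMeasurableAtFilter _ _) hU.continuousAt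
  have hUK (t : ℝ) : U t = ((∫ s in 0..t + δ, U s) - ∫ s in 0..t, U s) * ↑K⁻¹ := by
    rw [Units.eq_mul_inv_iff_mul_eq, hK, intervalIntegral.integral_interval_sub_left
      (hU.intervalIntegrable _ _) (hU.intervalIntegrable _ _)]
    calc U t * ∫ s in 0..δ, U s = ∫ s in 0..δ, U t * U s :=
          ((ContinuousLinearMap.mul ℝ A (U t)).intervalIntegral_comp_comm
            (hU.intervalIntegrable _ _)).symm
      _ = ∫ s in t..t + δ, U s := by
          simp only [← hadd, intervalIntegral.integral_comp_add_left, add_zero]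
  refine ⟨(U δ - 1) * ↑K⁻¹, fun t => ?_⟩
  rw [← mul_assoc, mul_sub, ← hadd, mul_one]
  exact ((((hF _).comp_add_const t δ).sub (hF t)).mul_const _).congr_of_eventuallyEq
    (Eventually.of_forall hUK)

theorem exists_eq_exp_of_continuous_of_map_add {U : ℝ → A} (hU : Continuous U) (hU0 : U 0 = 1)
    (hadd : ∀ s t, U (s + t) = U s * U t) : ∃ x : A, ∀ t, U t = exp (t • x) := by
  obtain ⟨x, hx⟩ := exists_hasDerivAt_of_continuous_of_map_add hU hU0 hadd
  have hderiv (t : ℝ) : HasDerivAt (fun t => U t * exp (t • -x)) 0 t := by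
    convert! (hx t).mul (hasDerivAt_exp_smul_const' (𝕂 := ℝ) (-x) t) using 1
    noncomm_ring
  have hconst (t : ℝ) : U t * exp (t • -x) = 1 := by
    simpa [hU0] using is_const_of_deriv_eq_zero (fun t => (hderiv t).differentiableAt)
      (fun t => (hderiv t).deriv) t 0
  refine ⟨x, fun t => ?_⟩
  have hexp : exp (t • -x) * exp (t • x) = 1 := by
    let := NormedAlgebra.restrictScalars ℚ ℝ A
    rw [← NormedSpace.exp_add_of_commute (((Commute.refl x).neg_left.smul_left t).smul_right t)]
    simp
  rw [← mul_one (U t), ← hexp, ← mul_assoc, hconst, one_mul]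

theorem exists_isNilpotent_eq_exp_of_semiconjBy {A : Type*} [NormedRing A]
    [NormedAlgebra ℝ A] [FiniteDimensional ℝ A] {U : ℝ → A} (hU : Continuous U) (hU0 : U 0 = 1)
    (hadd : ∀ s t, U (s + t) = U s * U t) {b : Aˣ} {c : ℝ} (hc : 1 < c)
    (hb : ∀ t, SemiconjBy (b : A) (U t) (U (c * t))) :
    ∃ x, IsNilpotent x ∧ ∀ t, U t = exp (t • x) := by
  have := FiniteDimensional.complete ℝ A
  obtain ⟨x, hx⟩ := exists_eq_exp_of_continuous_of_map_add hU hU0 hadd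
  refine ⟨x, isNilpotent_of_semiconjBy_smul (b := b)
    (pow_right_injective₀ (zero_lt_one.trans hc) hc.ne')
    (semiconjBy_of_forall_semiconjBy_exp fun t => ?_), hx⟩
  rw [← hx, smul_smul, mul_comm, ← hx]
  exact hb t

end OneParameterGroups

section ExpAsymptotics

open NormedSpace Polynomial

variable {E : Type*} [NormedAddCommGroup E] [NormedSpace ℝ E] [CompleteSpace E] {X : E →L[ℝ] E}
  {D : ℕ}

theorem exp_smul_apply_eq_sum {x : E} (h : (X ^ (D + 1)) x = 0) (t : ℝ) :
    exp (t • X) x = ∑ j ∈ Finset.range (D + 1), t ^ j • (j.factorial : ℝ)⁻¹ • (X ^ j) x := by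
  have hsum : HasSum (fun j => t ^ j • (j.factorial : ℝ)⁻¹ • (X ^ j) x) (exp (t • X) x) := by
    have := (exp_series_hasSum_exp' (𝕂 := ℝ) (t • X)).mapL (ContinuousLinearMap.apply ℝ E x)
    simpa only [_root_.smul_pow, smul_comm _ (_ ^ _), ContinuousLinearMap.apply_apply,
      _root_.smul_apply] using this
  refine hsum.unique (hasSum_sum_of_ne_finset_zero fun j hj => ?_)
  obtain ⟨i, rfl⟩ := Nat.exists_eq_add_of_le (Nat.le_of_not_lt (Finset.mem_range.not.1 hj))
  have hX : (X ^ (D + 1 + i)) x = 0 := by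
    rw [add_comm, pow_add, mul_apply_eq_comp, h, map_zero]
  rw [hX, smul_zero, smul_zero]

theorem exp_smul_apply_eq_self {x : E} (h : X x = 0) (t : ℝ) : exp (t • X) x = x := by
  rw [exp_smul_apply_eq_sum (D := 0) (by simpa using h)]
  simp

theorem pow_apply_exp_smul_apply {x : E} (h : (X ^ (D + 1)) x = 0) (t : ℝ) :
    (X ^ D) (exp (t • X) x) = (X ^ D) x := by
  have hcomm : Commute (X ^ D) (exp (t • X)) :=
    (((Commute.refl X).smul_right t).exp_right).pow_left D
  rw [← mul_apply_eq_comp, hcomm.eq, mul_apply_eq_comp, exp_smul_apply_eq_self]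
  rwa [← mul_apply_eq_comp, ← pow_succ']

theorem exists_polynomial_eval_eq_apply_exp_smul {x : E} (h : (X ^ (D + 1)) x = 0)
    (L : E →L[ℝ] ℝ) : ∃ f : ℝ[X], f.natDegree ≤ D ∧ ∀ t, f.eval t = L (exp (t • X) x) := by
  refine ⟨∑ j ∈ Finset.range (D + 1), monomial j (L ((j.factorial : ℝ)⁻¹ • (X ^ j) x)),
    natDegree_sum_le_of_forall_le _ _ fun j hj => (natDegree_monomial_le _).trans
      (Nat.lt_succ_iff.1 (Finset.mem_range.1 hj)), fun t => ?_⟩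
  rw [exp_smul_apply_eq_sum h, eval_finsetSum, map_sum]
  simp only [eval_monomial, map_smul, smul_eq_mul, mul_comm]

theorem tendsto_inv_pow_smul_exp_smul_apply {y : ℝ → E} {y₀ : E} (hy : Tendsto y atTop (𝓝 y₀))
    (h : ∀ t, (X ^ (D + 1)) (y t) = 0) :
    Tendsto (fun t : ℝ => (t ^ D)⁻¹ • exp (t • X) (y t)) atTop
      (𝓝 ((D.factorial : ℝ)⁻¹ • (X ^ D) y₀)) := by
  have hXy (j : ℕ) : Tendsto (fun t => (j.factorial : ℝ)⁻¹ • (X ^ j) (y t)) atTop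
      (𝓝 ((j.factorial : ℝ)⁻¹ • (X ^ j) y₀)) :=
    (((X ^ j).continuous.tendsto y₀).comp hy).const_smul _
  have hlow : Tendsto (fun t : ℝ => ∑ j ∈ Finset.range D,
      (t ^ j / t ^ D) • (j.factorial : ℝ)⁻¹ • (X ^ j) (y t)) atTop (𝓝 0) := by
    rw [← Finset.sum_const_zero (ι := ℕ) (s := Finset.range D)]
    refine tendsto_finsetSum _ fun j hj => ?_
    simpa only [zero_smul] using
      (tendsto_pow_div_pow_atTop_zero (Finset.mem_range.1 hj)).smul (hXy j)
  rw [← zero_add ((D.factorial : ℝ)⁻¹ • _)]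
  refine (hlow.add (hXy D)).congr' ?_
  filter_upwards [eventually_ne_atTop 0] with t ht
  rw [exp_smul_apply_eq_sum (h t), Finset.smul_sum, Finset.sum_range_succ,
    inv_smul_smul₀ (pow_ne_zero D ht)]
  simp only [smul_smul, div_eq_inv_mul, mul_assoc]

end ExpAsymptotics

/-- Relations in `PSL₂(ℝ)` between the torus `a s = ±diag(exp (s/2), exp (-s/2))`, the unipotent
group `n t = ±[[1, t], [0, 1]]` and the Weyl element `w = ±[[0, 1], [-1, 0]]`. The opposite
unipotent group is `p ↦ w * n p * w`. -/
structure IsBruhatFrame {G : Type*} [Group G] (a n : ℝ → G) (w : G) : Prop where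
  a_add (s t : ℝ) : a (s + t) = a s * a t
  n_add (s t : ℝ) : n (s + t) = n s * n t
  a_mul_n (s t : ℝ) : a s * n t = n (Real.exp s * t) * a s
  w_mul_w : w * w = 1
  w_mul_a (s : ℝ) : w * a s = a (-s) * w
  w_mul_n_one_pow : (w * n 1) ^ 3 = 1

namespace IsBruhatFrame

variable {G : Type*} [Group G] {a n : ℝ → G} {w : G}

theorem a_zero (h : IsBruhatFrame a n w) : a 0 = 1 := by
  simpa using h.a_add 0 0

theorem n_zero (h : IsBruhatFrame a n w) : n 0 = 1 := by
  simpa using h.n_add 0 0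

theorem a_neg (h : IsBruhatFrame a n w) (s : ℝ) : a (-s) = (a s)⁻¹ :=
  eq_inv_of_mul_eq_one_left (by rw [← h.a_add, neg_add_cancel, h.a_zero])

theorem n_neg (h : IsBruhatFrame a n w) (t : ℝ) : n (-t) = (n t)⁻¹ :=
  eq_inv_of_mul_eq_one_left (by rw [← h.n_add, neg_add_cancel, h.n_zero])

theorem w_inv (h : IsBruhatFrame a n w) : w⁻¹ = w :=
  inv_eq_of_mul_eq_one_left h.w_mul_w

theorem n_exp_mul (h : IsBruhatFrame a n w) (s t : ℝ) :
    n (Real.exp s * t) = a s * n t * a (-s) := by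
  rw [h.a_mul_n, h.a_neg, mul_inv_cancel_right]

theorem a_mul_w (h : IsBruhatFrame a n w) (s : ℝ) : a s * w = w * a (-s) := by
  rw [h.w_mul_a, neg_neg]

theorem w_mul_n_neg_one_pow (h : IsBruhatFrame a n w) : (w * n (-1)) ^ 3 = 1 := by
  have hconj : w * n (-1) = w * (w * n 1)⁻¹ * w⁻¹ := by
    rw [h.n_neg, _root_.mul_inv_rev, h.w_inv, mul_assoc, mul_assoc, h.w_mul_w, mul_one]
  rw [hconj, conj_pow, inv_pow, h.w_mul_n_one_pow, inv_one, mul_one, mul_inv_cancel]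

theorem a_two_mul_of_pow_eq_one (h : IsBruhatFrame a n w) {σ : ℝ} (hσ : (w * n σ) ^ 3 = 1)
    (s : ℝ) : a (2 * s) =
      w * n (Real.exp (-s) * σ) * w * n (Real.exp s * σ) * w * n (Real.exp (-s) * σ) := by
  have hswap (s : ℝ) : a s * w * a s = w := by rw [h.a_mul_w, h.a_neg, inv_mul_cancel_right]
  calc a (2 * s) = a s * (w * n σ) ^ 3 * a s := by rw [hσ, mul_one, two_mul, h.a_add]
    _ = w * a (-s) * n σ * w * n σ * w * n σ * a s := by
        rw [← h.a_mul_w, pow_three]; simp only [mul_assoc]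
    _ = w * a (-s) * n σ * (a s * w * a s) * n σ * (a (-s) * w * a (-s)) * n σ * a s := by
        rw [hswap, hswap]
    _ = _ := by
        rw [h.n_exp_mul, h.n_exp_mul, neg_neg]; simp only [mul_assoc]

theorem a_two_mul_log (h : IsBruhatFrame a n w) {t : ℝ} (ht : t ≠ 0) :
    a (2 * Real.log t) = w * n t⁻¹ * w * n t * w * n t⁻¹ := by
  rcases ht.lt_or_gt with ht | ht
  · have := h.a_two_mul_of_pow_eq_one h.w_mul_n_neg_one_pow (Real.log t)
    rwa [Real.exp_neg, Real.exp_log_of_neg ht, mul_neg_one, mul_neg_one, inv_neg, neg_neg,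
      neg_neg] at this
  · have := h.a_two_mul_of_pow_eq_one h.w_mul_n_one_pow (Real.log t)
    rwa [Real.exp_neg, Real.exp_log ht, mul_one, mul_one] at this

theorem n_mul_w (h : IsBruhatFrame a n w) {t : ℝ} (ht : t ≠ 0) :
    n t * w = w * n (-t⁻¹) * w * a (2 * Real.log t) * n (-t⁻¹) := by
  calc n t * w = (w * n t⁻¹ * w)⁻¹ * (w * n t⁻¹ * w * n t * w * n t⁻¹) * (n t⁻¹)⁻¹ := by group
    _ = _ := by
      rw [← h.a_two_mul_log ht, h.n_neg, _root_.mul_inv_rev, _root_.mul_inv_rev, h.w_inv]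
      simp only [mul_assoc]

theorem exists_mul_eq_opp_mul_a_mul (h : IsBruhatFrame a n w) {x y : G}
    (hx : x ∈ insert w (Set.range n)) (hy : y ∈ insert w (Set.range n)) :
    ∃ p s, ∃ z ∈ insert w (Set.range n), x * y = w * n p * w * a s * z := by
  have hn (t : ℝ) : n t ∈ insert w (Set.range n) := Or.inr ⟨t, rfl⟩
  have hw : w ∈ insert w (Set.range n) := Or.inl rfl
  have hone : w * n 0 * w * a 0 = 1 := by rw [h.n_zero, h.a_zero, mul_one, mul_one, h.w_mul_w]
  rcases hx with rfl | ⟨s, rfl⟩ <;> rcases hy with rfl | ⟨t, rfl⟩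
  · exact ⟨0, 0, n 0, hn 0, by rw [hone, one_mul, h.w_mul_w, h.n_zero]⟩
  · exact ⟨t, 0, x, hw, by rw [h.a_zero, mul_one, mul_assoc, h.w_mul_w, mul_one]⟩
  · rcases eq_or_ne s 0 with rfl | hs
    · exact ⟨0, 0, y, hw, by rw [hone, h.n_zero]⟩
    · exact ⟨-s⁻¹, 2 * Real.log s, n (-s⁻¹), hn _, h.n_mul_w hs⟩
  · exact ⟨0, 0, n (s + t), hn _, by rw [hone, one_mul, h.n_add]⟩

theorem induction_of_mem_closure (h : IsBruhatFrame a n w) {P : G → Prop}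
    (hopp : ∀ p g, P g → P (w * n p * w * g)) (ha : ∀ s g, P g → P (a s * g))
    (hn : ∀ t, P (n t)) (hw : P w) {g : G} (hg : g ∈ Subgroup.closure (insert w (Set.range n))) :
    P g := by
  have hstep (y) (hy : y ∈ insert w (Set.range n)) (g)
      (ih : ∀ x ∈ insert w (Set.range n), P (x * g)) (x) (hx : x ∈ insert w (Set.range n)) :
      P (x * (y * g)) := by
    obtain ⟨p, s, z, hz, hxy⟩ := h.exists_mul_eq_opp_mul_a_mul hx hy
    rw [← mul_assoc, hxy, mul_assoc, mul_assoc]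
    exact hopp _ _ (ha _ _ (ih z hz))
  suffices ∀ x ∈ insert w (Set.range n), P (x * g) by
    simpa [h.n_zero] using this (n 0) (Or.inr ⟨0, rfl⟩)
  induction hg using Subgroup.closure_induction_left with
  | one =>
    rintro x (rfl | ⟨t, rfl⟩) <;> rw [mul_one]
    exacts [hw, hn t]
  | mul_left y hy g _ ih => exact hstep y hy g ih
  | inv_mul_cancel y hy g _ ih =>
    refine hstep y⁻¹ ?_ g ih
    rcases hy with rfl | ⟨t, rfl⟩
    exacts [Or.inl h.w_inv, Or.inr ⟨-t, h.n_neg t⟩]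

end IsBruhatFrame

section Representation

open NormedSpace Asymptotics Polynomial

namespace IsBruhatFrame

variable {G : Type*} [Group G] {a n : ℝ → G} {w : G} {V : Type*} [NormedAddCommGroup V]
  [NormedSpace ℝ V] [CompleteSpace V] {ρ : G →* (V →L[ℝ] V)} {X : V →L[ℝ] V} {D : ℕ} {v : V}

theorem continuous_apply_mul_n_mul (hX : ∀ t, ρ (n t) = exp (t • X)) (g g' : G) :
    Continuous fun t => ρ (g * n t * g') := by
  simp only [map_mul, hX]
  exact continuous_iff_continuousAt.2 fun t =>
    (((hasDerivAt_exp_smul_const (𝕂 := ℝ) X t).const_mul (ρ g)).mul_const (ρ g')).continuousAt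

theorem tendsto_inv_pow_smul_a_two_mul_log (h : IsBruhatFrame a n w)
    (hX : ∀ t, ρ (n t) = exp (t • X)) (hv : ∀ g, (X ^ (D + 1)) (ρ g v) = 0) (g : G) :
    Tendsto (fun t : ℝ => (t ^ D)⁻¹ • ρ (a (2 * Real.log t) * g) v) atTop
      (𝓝 ((D.factorial : ℝ)⁻¹ • (X ^ D) (ρ (w * g) v))) := by
  have hinv (g : G) : Tendsto (fun t : ℝ => ρ (w * n t⁻¹ * g)) atTop (𝓝 (ρ (w * g))) := by
    have := ((continuous_apply_mul_n_mul hX w g).tendsto 0).comp tendsto_inv_atTop_zero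
    rwa [h.n_zero, mul_one] at this
  have hy : Tendsto (fun t : ℝ => ρ (w * n t⁻¹ * g) v) atTop (𝓝 (ρ (w * g) v)) :=
    ((ContinuousLinearMap.apply ℝ V v).continuous.tendsto _).comp (hinv g)
  have hopp : Tendsto (fun t : ℝ => ρ (w * n t⁻¹ * w)) atTop (𝓝 1) := by
    simpa only [h.w_mul_w, map_one] using hinv w
  refine ((isBoundedBilinearMap_apply.continuous.tendsto _).comp (hopp.prodMk_nhds
    (tendsto_inv_pow_smul_exp_smul_apply hy fun t => hv _))).congr' ?_
  filter_upwards [eventually_ne_atTop 0] with t ht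
  simp only [h.a_two_mul_log ht, Function.comp_apply, map_smul, ← hX, ← mul_apply_eq_comp,
    ← map_mul, mul_assoc]

theorem pow_apply_a_mul (h : IsBruhatFrame a n w)
    (hX : ∀ t, ρ (n t) = exp (t • X)) (hv : ∀ g, (X ^ (D + 1)) (ρ g v) = 0) {c : ℝ} (hc : 0 < c)
    (g : G) :
    (X ^ D) (ρ (w * (a (2 * Real.log c) * g)) v) = c ^ D • (X ^ D) (ρ (w * g) v) := by
  have hlim := h.tendsto_inv_pow_smul_a_two_mul_log hX hv
  have hscaled := ((hlim g).comp (tendsto_id.atTop_mul_const hc)).const_smul (c ^ D)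
  rw [smul_comm] at hscaled
  refine smul_right_injective V (inv_ne_zero (Nat.cast_ne_zero.2 D.factorial_ne_zero))
    (tendsto_nhds_unique (hlim _) (hscaled.congr' ?_))
  filter_upwards [eventually_gt_atTop 0] with t ht
  have ha : a (2 * Real.log (t * c)) = a (2 * Real.log t) * a (2 * Real.log c) := by
    rw [Real.log_mul ht.ne' hc.ne', mul_add, h.a_add]
  simp only [Function.comp_apply, id, ha, mul_assoc, smul_smul, mul_pow, mul_inv]
  rw [mul_comm, mul_assoc, inv_mul_cancel₀ (pow_ne_zero D hc.ne'), mul_one]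

theorem pow_apply_opp_mul (h : IsBruhatFrame a n w)
    (hX : ∀ t, ρ (n t) = exp (t • X)) (hv : ∀ g, (X ^ (D + 1)) (ρ g v) = 0) (p : ℝ) (g : G) :
    (X ^ D) (ρ (w * (w * n p * w * g)) v) = (X ^ D) (ρ (w * g) v) := by
  have hg : w * (w * n p * w * g) = n p * (w * g) := by
    simp only [← mul_assoc, h.w_mul_w, one_mul]
  rw [hg, map_mul, mul_apply_eq_comp, hX, pow_apply_exp_smul_apply (hv _)]

theorem isBigO_pow_apply_n_add (h : IsBruhatFrame a n w)
    (hX : ∀ t, ρ (n t) = exp (t • X)) (hv : ∀ g, (X ^ (D + 1)) (ρ g v) = 0) {τ : ℝ}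
    (hτ : IsBounded ((fun s => ρ (a s * n τ) v) '' Set.Ici 0)) :
    (fun ε => (X ^ D) (ρ (w * n (τ + ε)) v)) =O[𝓝[>] 0] fun ε => ε ^ (D / 2 : ℝ) := by
  obtain ⟨C, hC⟩ := isBounded_iff_forall_norm_le.1 hτ
  refine IsBigO.of_bound (‖X ^ D * ρ (w * n 1)‖ * C) ?_
  filter_upwards [Ioo_mem_nhdsGT one_pos] with ε ⟨hε, hε1⟩
  have hn : n (τ + ε) = a (2 * Real.log √ε) * (n 1 * (a (-Real.log ε) * n τ)) := by
    rw [Real.log_sqrt hε.le, mul_div_cancel₀ _ two_ne_zero, ← mul_assoc, ← mul_assoc,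
      ← h.n_exp_mul, Real.exp_log hε, mul_one, ← h.n_add, add_comm]
  have hpow : √ε ^ D = ε ^ (D / 2 : ℝ) := by
    rw [Real.sqrt_eq_rpow, ← Real.rpow_mul_natCast hε.le, one_div_mul_eq_div]
  have hbound : ‖(X ^ D) (ρ (w * (n 1 * (a (-Real.log ε) * n τ))) v)‖ ≤
      ‖X ^ D * ρ (w * n 1)‖ * C := by
    rw [← mul_assoc, map_mul, mul_apply_eq_comp, ← mul_apply_eq_comp (X ^ D)]
    exact (X ^ D * ρ (w * n 1)).le_opNorm_of_le
      (hC _ ⟨_, neg_nonneg.2 (Real.log_nonpos hε.le hε1.le), rfl⟩)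
  rw [hn, h.pow_apply_a_mul hX hv (Real.sqrt_pos.2 hε), hpow, norm_smul, mul_comm]
  gcongr

theorem pow_apply_n_eq_zero (h : IsBruhatFrame a n w)
    (hX : ∀ t, ρ (n t) = exp (t • X)) (hv : ∀ g, (X ^ (D + 1)) (ρ g v) = 0) (hD : 0 < D)
    {S : Finset ℝ} (hS : 2 < S.card)
    (hbdd : ∀ τ ∈ S, IsBounded ((fun s => ρ (a s * n τ) v) '' Set.Ici 0)) (t : ℝ) :
    (X ^ D) (ρ (w * n t) v) = 0 := by
  refine SeparatingDual.eq_zero_of_forall_dual_eq_zero (R := ℝ) fun ℓ => ?_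
  obtain ⟨f, hfdeg, hf⟩ := exists_polynomial_eval_eq_apply_exp_smul
    (by simpa using hv 1) (ℓ ∘L (X ^ D) ∘L ρ w)
  replace hf (t) : f.eval t = ℓ ((X ^ D) (ρ (w * n t) v)) := by
    rw [hf, ← hX, map_mul]; rfl
  have hdeg : f.natDegree < S.card * (D / 2 : ℝ) := by
    have hfD : (f.natDegree : ℝ) ≤ D := mod_cast hfdeg
    have hD' : (0 : ℝ) < D := mod_cast hD
    have hS' : (2 : ℝ) < S.card := mod_cast hS
    nlinarith
  have hf0 : f = 0 := polynomial_eq_zero_of_isBigO hdeg fun τ hτ => by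
    simp only [hf]
    exact (ℓ.isBigO_comp _ _).trans (h.isBigO_pow_apply_n_add hX hv (hbdd τ hτ))
  rw [← hf, hf0, eval_zero]

theorem pow_apply_eq_zero (h : IsBruhatFrame a n w)
    (hgen : Subgroup.closure (insert w (Set.range n)) = ⊤)
    (hX : ∀ t, ρ (n t) = exp (t • X)) (hv : ∀ g, (X ^ (D + 1)) (ρ g v) = 0)
    (hn : ∀ t, (X ^ D) (ρ (w * n t) v) = 0) (g : G) : (X ^ D) (ρ g v) = 0 := by
  suffices hP : ∀ g, (X ^ D) (ρ (w * g) v) = 0 by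
    simpa only [← mul_assoc, h.w_mul_w, one_mul] using hP (w * g)
  refine fun g => h.induction_of_mem_closure (P := fun g => (X ^ D) (ρ (w * g) v) = 0)
    (fun p g hg => ?_) (fun s g hg => ?_) hn ?_ (hgen ▸ Subgroup.mem_top g)
  · rw [h.pow_apply_opp_mul hX hv, hg]
  · have hs : s = 2 * Real.log (Real.exp (s / 2)) := by
      rw [Real.log_exp, mul_div_cancel₀ _ two_ne_zero]
    rw [hs, h.pow_apply_a_mul hX hv (Real.exp_pos _), hg, smul_zero]
  · have hpos {p : ℝ} (hp : 0 < p) : (X ^ D) (ρ (w * (n p * w)) v) = 0 := by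
      rw [h.n_mul_w hp.ne', mul_assoc, h.pow_apply_opp_mul hX hv, h.pow_apply_a_mul hX hv hp, hn,
        smul_zero]
    have hcont : Continuous fun p => (X ^ D) (ρ (w * (n p * w)) v) := by
      simp only [← mul_assoc]
      exact (X ^ D).continuous.comp ((continuous_apply_mul_n_mul hX w w).clm_apply continuous_const)
    have hlim := (hcont.tendsto 0).mono_left (nhdsWithin_le_nhds (s := Set.Ioi 0))
    rw [h.n_zero, one_mul] at hlim
    refine tendsto_nhds_unique (l := 𝓝[>] (0 : ℝ)) (hlim.congr' ?_) tendsto_const_nhds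
    filter_upwards [self_mem_nhdsWithin] with p hp using hpos hp

theorem apply_eq_zero (h : IsBruhatFrame a n w)
    (hgen : Subgroup.closure (insert w (Set.range n)) = ⊤)
    (hX : ∀ t, ρ (n t) = exp (t • X)) (hXnil : IsNilpotent X) {S : Finset ℝ} (hS : 2 < S.card)
    (hbdd : ∀ τ ∈ S, IsBounded ((fun s => ρ (a s * n τ) v) '' Set.Ici 0)) (g : G) :
    X (ρ g v) = 0 := by
  obtain ⟨k, hk⟩ := hXnil
  have hdescent (D : ℕ) : (∀ g, (X ^ (D + 1)) (ρ g v) = 0) → ∀ g, X (ρ g v) = 0 := by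
    induction D with
    | zero => simp
    | succ D ih =>
      exact fun hv => ih fun g => h.pow_apply_eq_zero hgen hX hv
        (h.pow_apply_n_eq_zero hX hv D.succ_pos hS hbdd) g
  exact hdescent k (fun g => by simp [pow_succ, hk]) g

theorem apply_eq_self (h : IsBruhatFrame a n w)
    (hgen : Subgroup.closure (insert w (Set.range n)) = ⊤)
    (hX : ∀ t, ρ (n t) = exp (t • X)) (hv : ∀ g, X (ρ g v) = 0) (g : G) : ρ g v = v := by
  have hn (t : ℝ) (g : G) : ρ (n t) (ρ g v) = ρ g v := by
    rw [hX, exp_smul_apply_eq_self (hv g)]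
  have hn1 (t : ℝ) : ρ (n t) v = v := by
    simpa only [map_one, one_apply_eq_self] using hn t 1
  have hww : ρ w (ρ w v) = v := by
    rw [← mul_apply_eq_comp, ← map_mul, h.w_mul_w, map_one, one_apply_eq_self]
  have hw : ρ w v = v :=
    calc ρ w v = ρ ((w * n 1) ^ 3) v := by
          simp only [pow_three, map_mul, mul_apply_eq_comp, hn1, hn, hww]
      _ = v := by rw [h.w_mul_n_one_pow, map_one, one_apply_eq_self]
  induction (hgen ▸ Subgroup.mem_top g : g ∈ Subgroup.closure (insert w (Set.range n))) using
    Subgroup.closure_induction with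
  | mem x hx =>
    rcases hx with rfl | ⟨t, rfl⟩
    exacts [hw, hn1 t]
  | one => rw [map_one, one_apply_eq_self]
  | mul x y _ _ hx hy => rw [map_mul, mul_apply_eq_comp, hy, hx]
  | inv x _ hx =>
    conv_lhs => rw [← hx]
    rw [← mul_apply_eq_comp, ← map_mul, inv_mul_cancel, map_one, one_apply_eq_self]

end IsBruhatFrame

end Representation

section FiniteDimensional

namespace IsBruhatFrame

variable {G : Type*} [Group G] {a n : ℝ → G} {w : G}

theorem a_mem_closure (h : IsBruhatFrame a n w) (s : ℝ) :
    a s ∈ Subgroup.closure (insert w (Set.range n)) := by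
  have hw : w ∈ Subgroup.closure (insert w (Set.range n)) := Subgroup.subset_closure (Or.inl rfl)
  have hn (t : ℝ) : n t ∈ Subgroup.closure (insert w (Set.range n)) :=
    Subgroup.subset_closure (Or.inr ⟨t, rfl⟩)
  rw [← mul_div_cancel₀ s two_ne_zero, ← Real.log_exp (s / 2), h.a_two_mul_log (Real.exp_ne_zero _)]
  exact mul_mem (mul_mem (mul_mem (mul_mem (mul_mem hw (hn _)) hw) (hn _)) hw) (hn _)

theorem codRestrict (h : IsBruhatFrame a n w) {H : Subgroup G} (ha : ∀ s, a s ∈ H)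
    (hn : ∀ t, n t ∈ H) (hw : w ∈ H) :
    IsBruhatFrame (fun s => (⟨a s, ha s⟩ : H)) (fun t => ⟨n t, hn t⟩) ⟨w, hw⟩ where
  a_add s t := Subtype.ext (h.a_add s t)
  n_add s t := Subtype.ext (h.n_add s t)
  a_mul_n s t := Subtype.ext (h.a_mul_n s t)
  w_mul_w := Subtype.ext h.w_mul_w
  w_mul_a s := Subtype.ext (h.w_mul_a s)
  w_mul_n_one_pow := Subtype.ext h.w_mul_n_one_pow

variable {V : Type*} [NormedAddCommGroup V] [NormedSpace ℝ V] [FiniteDimensional ℝ V]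
  {ρ : G →* (V →L[ℝ] V)} {v : V} {S : Finset ℝ}

theorem exists_isNilpotent_eq_exp (h : IsBruhatFrame a n w) (hcont : Continuous fun t => ρ (n t)) :
    ∃ X : V →L[ℝ] V, IsNilpotent X ∧ ∀ t, ρ (n t) = NormedSpace.exp (t • X) :=
  exists_isNilpotent_eq_exp_of_semiconjBy hcont (by rw [h.n_zero, map_one])
    (fun s t => by rw [h.n_add, map_mul]) (b := Units.map ρ (toUnits (a 1)))
    (Real.one_lt_exp_iff.2 one_pos) fun t => by
      simp only [Units.coe_map, val_toUnits_apply, SemiconjBy, ← map_mul,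
        h.a_mul_n]

theorem apply_eq_self_of_closure_eq_top (h : IsBruhatFrame a n w)
    (hgen : Subgroup.closure (insert w (Set.range n)) = ⊤) (hcont : Continuous fun t => ρ (n t))
    (hS : 2 < S.card) (hbdd : ∀ τ ∈ S, IsBounded ((fun s => ρ (a s * n τ) v) '' Set.Ici 0))
    (g : G) : ρ g v = v := by
  have := FiniteDimensional.complete ℝ V
  obtain ⟨X, hXnil, hX⟩ := h.exists_isNilpotent_eq_exp hcont
  exact h.apply_eq_self hgen hX (h.apply_eq_zero hgen hX hXnil hS hbdd) g

theorem apply_eq_self_of_mem_closure (h : IsBruhatFrame a n w) (hcont : Continuous fun t => ρ (n t))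
    (hS : 2 < S.card) (hbdd : ∀ τ ∈ S, IsBounded ((fun s => ρ (a s * n τ) v) '' Set.Ici 0))
    {g : G} (hg : g ∈ Subgroup.closure (insert w (Set.range n))) : ρ g v = v := by
  have hn (t : ℝ) : n t ∈ Subgroup.closure (insert w (Set.range n)) :=
    Subgroup.subset_closure (Or.inr ⟨t, rfl⟩)
  have hw : w ∈ Subgroup.closure (insert w (Set.range n)) := Subgroup.subset_closure (Or.inl rfl)
  refine (h.codRestrict h.a_mem_closure hn hw).apply_eq_self_of_closure_eq_top
    (ρ := ρ.comp (Subgroup.subtype _)) ?_ hcont hS hbdd ⟨g, hg⟩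
  convert Subgroup.closure_closure_coe_preimage (k := insert w (Set.range n)) using 2
  ext x
  simp [Subtype.ext_iff]

end IsBruhatFrame

end FiniteDimensional

section Lorentz

variable {n : ℕ}

theorem lorAct_one (x : Fin (n + 1) → ℝ) : lorAct (1 : LorentzGrp n) x = x := by
  simp [lorAct]

theorem lorAct_mul (g h : LorentzGrp n) (x : Fin (n + 1) → ℝ) :
    lorAct (g * h) x = lorAct g (lorAct h x) := by
  simp [lorAct]

theorem lorAct_single_one (g : LorentzGrp n) (i j : Fin (n + 1)) :
    lorAct g (Pi.single j 1) i = g.1 i j := by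
  simp [lorAct]

theorem lorAct_ext {g h : LorentzGrp n} (hgh : ∀ x, lorAct g x = lorAct h x) : g = h :=
  Subtype.ext <| Matrix.GeneralLinearGroup.ext fun i j => by
    rw [← lorAct_single_one, hgh, lorAct_single_one]

theorem lorQ_lorAct (g : LorentzGrp n) (x : Fin (n + 1) → ℝ) : lorQ n (lorAct g x) = lorQ n x :=
  g.2 x

theorem lorQ_add (x y : Fin (n + 1) → ℝ) :
    lorQ n (x + y) = lorQ n x + lorQ n y + 2 * lorB n x y := by
  have hsum : (∑ i : Fin (n + 1), if i ≠ 0 ∧ i ≠ Fin.last n then (x + y) i ^ 2 else 0) =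
      (∑ i : Fin (n + 1), if i ≠ 0 ∧ i ≠ Fin.last n then x i ^ 2 else 0) +
      (∑ i : Fin (n + 1), if i ≠ 0 ∧ i ≠ Fin.last n then y i ^ 2 else 0) +
      2 * ∑ i : Fin (n + 1), if i ≠ 0 ∧ i ≠ Fin.last n then x i * y i else 0 := by
    simp only [Finset.mul_sum, ← Finset.sum_add_distrib]
    refine Finset.sum_congr rfl fun i _ => ?_
    split_ifs
    · rw [Pi.add_apply]; ring
    · ring
  rw [lorQ, hsum, lorQ, lorQ, lorB, Pi.add_apply, Pi.add_apply]
  ring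

theorem lorB_lorAct (g : LorentzGrp n) (x y : Fin (n + 1) → ℝ) :
    lorB n (lorAct g x) (lorAct g y) = lorB n x y := by
  have h := lorQ_lorAct g (x + y)
  have hadd : lorAct g (x + y) = lorAct g x + lorAct g y := Matrix.mulVec_add _ _ _
  rw [hadd, lorQ_add, lorQ_add, lorQ_lorAct, lorQ_lorAct] at h
  linarith

theorem continuous_lorentzGrp_of_lorAct {T : Type*} [TopologicalSpace T] {U : T → LorentzGrp n}
    (hU : ∀ x, Continuous fun t => lorAct (U t) x)
    (hUinv : ∀ x, Continuous fun t => lorAct (U t)⁻¹ x) : Continuous U := by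
  refine continuous_induced_rng.2 (Units.continuous_iff.2 ⟨?_, ?_⟩) <;>
    refine continuous_matrix fun i j => ?_
  · exact ((continuous_apply i).comp (hU (Pi.single j 1))).congr fun t => lorAct_single_one _ _ _
  · exact ((continuous_apply i).comp (hUinv (Pi.single j 1))).congr fun t =>
      lorAct_single_one _ _ _

theorem lorQ_two (x : Fin 3 → ℝ) : lorQ 2 x = 2 * x 0 * x 2 + x 1 ^ 2 := by
  have h2 : Fin.last 2 = 2 := rfl
  simp [lorQ, Fin.sum_univ_three, h2]

theorem lorB_two (x y : Fin 3 → ℝ) : lorB 2 x y = x 0 * y 2 + x 2 * y 0 + x 1 * y 1 := by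
  have h2 : Fin.last 2 = 2 := rfl
  simp [lorB, Fin.sum_univ_three, h2]

theorem lorB_column (g : LorentzGrp 2) (i j : Fin 3) :
    g.1 0 i * g.1 2 j + g.1 2 i * g.1 0 j + g.1 1 i * g.1 1 j =
      lorB 2 (Pi.single i 1) (Pi.single j 1) := by
  rw [← lorB_lorAct g, lorB_two]
  simp only [lorAct_single_one]

theorem lorAct_apply_two (g : LorentzGrp 2) (x : Fin 3 → ℝ) (i : Fin 3) :
    lorAct g x i = g.1 i 0 * x 0 + g.1 i 1 * x 1 + g.1 i 2 * x 2 := by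
  simp [lorAct, Matrix.mulVec, dotProduct, Fin.sum_univ_three]

/-- The Weyl element `(x₁, x₂, x₃) ↦ (-x₃ / 2, -x₂, -2 x₁)` of `O(1,2)`, scaled so that its product
with `n(1)` has order three. -/
def lorWeyl : LorentzGrp 2 :=
  let M : Matrix (Fin 3) (Fin 3) ℝ := !![0, 0, -1 / 2; 0, -1, 0; -2, 0, 0]
  have hM : M * M = 1 := by
    ext i j
    fin_cases i <;> fin_cases j <;> simp [M, Matrix.mul_apply, Fin.sum_univ_three]
    norm_num
  ⟨⟨M, M, hM, hM⟩, fun x => by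
    rw [lorQ_two, lorQ_two]
    simp [M, Matrix.mulVec, dotProduct, Fin.sum_univ_three]
    ring⟩

theorem lorAct_lorWeyl (x : Fin 3 → ℝ) : lorAct lorWeyl x = ![-x 2 / 2, -x 1, -2 * x 0] := by
  ext i
  fin_cases i <;> simp [lorAct, lorWeyl, Matrix.mulVec, dotProduct, Fin.sum_univ_three]
  ring

theorem connectedComponent_one_subset_of_mem_nhds {G : Type*} [TopologicalSpace G] [Group G]
    [ContinuousMul G] {H : Subgroup G} (hH : (H : Set G) ∈ 𝓝 1) :
    connectedComponent (1 : G) ⊆ H :=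
  have hopen := H.isOpen_of_mem_nhds hH
  IsClopen.connectedComponent_subset ⟨H.isClosed_of_isOpen hopen, hopen⟩ H.one_mem

variable {N : ℝ → LorentzGrp 2}
  (hN : ∀ (t : ℝ) (x : Fin 3 → ℝ),
    lorAct (N t) x = ![x 0 + t * x 1 - t ^ 2 / 2 * x 2, x 1 - t * x 2, x 2])
include hN

theorem lorAct_lorWeyl_mul_mul (p : ℝ) (x : Fin 3 → ℝ) :
    lorAct (lorWeyl * N p * lorWeyl) x =
      ![x 0, x 1 - 2 * p * x 0, x 2 + 2 * p * x 1 - 2 * p ^ 2 * x 0] := by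
  ext i
  fin_cases i <;> simp [lorAct_mul, lorAct_lorWeyl, hN] <;> ring

theorem mem_range_of_first_column {g : LorentzGrp 2} (h₀₀ : g.1 0 0 = 1) (h₁₀ : g.1 1 0 = 0)
    (h₂₀ : g.1 2 0 = 0) (h₁₁ : 0 < g.1 1 1) : g ∈ Set.range N := by
  have h₂₁ : g.1 2 1 = 0 := by
    simpa [lorB_two, h₀₀, h₁₀, h₂₀] using lorB_column g 0 1
  have h₂₂ : g.1 2 2 = 1 := by
    simpa [lorB_two, h₀₀, h₁₀, h₂₀] using lorB_column g 0 2
  have h₁₁' : g.1 1 1 = 1 := by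
    have hsq : g.1 1 1 * g.1 1 1 = 1 := by simpa [lorB_two, h₂₁] using lorB_column g 1 1
    exact (mul_self_eq_one_iff.1 hsq).resolve_right (by linarith)
  have h₁₂ : g.1 0 1 + g.1 1 2 = 0 := by
    simpa [lorB_two, h₂₁, h₂₂, h₁₁'] using lorB_column g 1 2
  have h₀₂ : g.1 0 2 + g.1 0 2 + g.1 1 2 * g.1 1 2 = 0 := by
    simpa [lorB_two, h₂₂] using lorB_column g 2 2
  refine ⟨g.1 0 1, lorAct_ext fun x => ?_⟩
  rw [hN]
  ext i
  fin_cases i <;> simp [lorAct_apply_two, h₀₀, h₁₀, h₂₀, h₂₁, h₂₂, h₁₁'] <;> grind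

theorem continuous_of_lorAct_unipotent : Continuous N := by
  have hcont (x) : Continuous fun t => lorAct (N t) x := by
    simp only [hN]
    fun_prop
  have hinv (t : ℝ) : (N t)⁻¹ = N (-t) := inv_eq_of_mul_eq_one_right <| lorAct_ext fun x => by
    ext i
    fin_cases i <;> simp [lorAct_mul, lorAct_one, hN]
    ring
  refine continuous_lorentzGrp_of_lorAct hcont fun x => ?_
  simp only [hinv]
  exact (hcont x).comp continuous_neg

variable {A : ℝ → LorentzGrp 2}
  (hA : ∀ (s : ℝ) (x : Fin 3 → ℝ),
    lorAct (A s) x = ![Real.exp s * x 0, x 1, Real.exp (-s) * x 2])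
include hA

theorem isBruhatFrame_lorentz : IsBruhatFrame A N lorWeyl where
  a_add s t := lorAct_ext fun x => by
    ext i
    fin_cases i <;> simp [lorAct_mul, hA, Real.exp_add] <;> ring
  n_add s t := lorAct_ext fun x => by
    ext i
    fin_cases i <;> simp [lorAct_mul, hN] <;> ring
  a_mul_n s t := lorAct_ext fun x => by
    ext i
    fin_cases i <;> simp [lorAct_mul, hA, hN, Real.exp_neg] <;> field_simp
  w_mul_w := lorAct_ext fun x => by
    ext i
    fin_cases i <;> simp [lorAct_mul, lorAct_one, lorAct_lorWeyl]
    ring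
  w_mul_a s := lorAct_ext fun x => by
    ext i
    fin_cases i <;> simp [lorAct_mul, lorAct_lorWeyl, hA] <;> ring
  w_mul_n_one_pow := lorAct_ext fun x => by
    ext i
    fin_cases i <;> simp [pow_three, lorAct_mul, lorAct_one, lorAct_lorWeyl, hN] <;> ring

-- Gaussian elimination: a torus element times an opposite unipotent one takes the first column of
-- `g` to `e₁`, and positivity of the minor selects `n(t)` in the stabilizer of `e₁`.
theorem mem_closure_of_minors_pos {g : LorentzGrp 2} (hg : 0 < g.1 0 0)
    (hminor : 0 < g.1 0 0 * g.1 1 1 - g.1 0 1 * g.1 1 0) :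
    g ∈ Subgroup.closure (insert lorWeyl (Set.range N)) := by
  have hframe := isBruhatFrame_lorentz hN hA
  set p := g.1 1 0 / (2 * g.1 0 0)
  set u := A (-Real.log (g.1 0 0)) * (lorWeyl * N p * lorWeyl)
  have hrow (i j : Fin 3) : (u * g).1 i j = ![(g.1 0 0)⁻¹ * g.1 0 j, g.1 1 j - 2 * p * g.1 0 j,
      g.1 0 0 * (g.1 2 j + 2 * p * g.1 1 j - 2 * p ^ 2 * g.1 0 j)] i := by
    rw [← lorAct_single_one, lorAct_mul, lorAct_mul, hA, lorAct_lorWeyl_mul_mul hN]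
    simp only [lorAct_single_one, neg_neg, Real.exp_neg, Real.exp_log hg]
    rfl
  have hnull : g.1 0 0 * g.1 2 0 + g.1 2 0 * g.1 0 0 + g.1 1 0 * g.1 1 0 = 0 := by
    simpa [lorB_two] using lorB_column g 0 0
  have hw : lorWeyl ∈ Subgroup.closure (insert lorWeyl (Set.range N)) :=
    Subgroup.subset_closure (Or.inl rfl)
  have hu : u ∈ Subgroup.closure (insert lorWeyl (Set.range N)) :=
    mul_mem (hframe.a_mem_closure _)
      (mul_mem (mul_mem hw (Subgroup.subset_closure (Or.inr ⟨p, rfl⟩))) hw)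
  refine (Subgroup.mul_mem_cancel_left _ hu).1
    (Subgroup.subset_closure (Or.inr (mem_range_of_first_column hN ?_ ?_ ?_ ?_)))
  · exact (hrow 0 0).trans (inv_mul_cancel₀ hg.ne')
  · refine (hrow 1 0).trans (show g.1 1 0 - 2 * p * g.1 0 0 = 0 from ?_)
    grind
  · refine (hrow 2 0).trans
      (show g.1 0 0 * (g.1 2 0 + 2 * p * g.1 1 0 - 2 * p ^ 2 * g.1 0 0) = 0 from ?_)
    grind
  · refine (div_pos hminor hg).trans_eq
      (Eq.trans (show _ = g.1 1 1 - 2 * p * g.1 0 1 from ?_) (hrow 1 1).symm)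
    grind

theorem connectedComponent_one_subset_closure :
    connectedComponent (1 : LorentzGrp 2) ⊆ Subgroup.closure (insert lorWeyl (Set.range N)) := by
  have hentry (i j : Fin 3) : Continuous fun g : LorentzGrp 2 => g.1 i j :=
    (Units.continuous_val.comp continuous_subtype_val).matrix_elem i j
  refine connectedComponent_one_subset_of_mem_nhds ?_
  filter_upwards [(hentry 0 0).tendsto 1 |>.eventually_const_lt (u := 0) (by simp),
    (((hentry 0 0).mul (hentry 1 1)).sub ((hentry 0 1).mul (hentry 1 0))).tendsto 1
      |>.eventually_const_lt (u := 0) (by simp)] with g hg hminor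
  exact mem_closure_of_minors_pos hN hA hg hminor

end Lorentz

/-- Let `ρ` be a continuous representation of `O(1,2)` on a finite-dimensional
real normed vector space `V`. Let `a^s` and `n(t)` be the elements of `O(1,2)` acting by
`a^s(x₁,x₂,x₃) = (e^s x₁, x₂, e^{-s} x₃)` and
`n(t)(x₁,x₂,x₃) = (x₁ + t x₂ − (t²/2) x₃, x₂ − t x₃, x₃)`, and let
`V⁻ = {v : {ρ(a^s) v : s ≥ 0} is bounded}`. If `t₁, t₂, t₃` are pairwise distinct reals,
then every `v ∈ ρ(n(t₁))(V⁻) ∩ ρ(n(t₂))(V⁻) ∩ ρ(n(t₃))(V⁻)` is fixed by the identity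
component of `O(1,2)`. -/
theorem fixed_by_identity_component_of_mem_three_translates_of_stable_subspace
    (V : Type*) [NormedAddCommGroup V] [NormedSpace ℝ V] [FiniteDimensional ℝ V]
    (ρ : LorentzGrp 2 →* (V →L[ℝ] V)) (hρ : Continuous fun g => ρ g)
    (A : ℝ → LorentzGrp 2)
    (hA : ∀ (s : ℝ) (x : Fin 3 → ℝ),
      lorAct (A s) x = ![Real.exp s * x 0, x 1, Real.exp (-s) * x 2])
    (N : ℝ → LorentzGrp 2)
    (hN : ∀ (t : ℝ) (x : Fin 3 → ℝ),
      lorAct (N t) x = ![x 0 + t * x 1 - t ^ 2 / 2 * x 2, x 1 - t * x 2, x 2])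
    (Vm : Set V)
    (hVm : Vm = {w : V | IsBounded {y : V | ∃ s : ℝ, 0 ≤ s ∧ y = ρ (A s) w}})
    (t₁ t₂ t₃ : ℝ) (h12 : t₁ ≠ t₂) (h13 : t₁ ≠ t₃) (h23 : t₂ ≠ t₃)
    (v : V)
    (hv1 : ∃ w ∈ Vm, v = ρ (N t₁) w)
    (hv2 : ∃ w ∈ Vm, v = ρ (N t₂) w)
    (hv3 : ∃ w ∈ Vm, v = ρ (N t₃) w) :
    ∀ h ∈ connectedComponent (1 : LorentzGrp 2), ρ h v = v := by
  have hframe := isBruhatFrame_lorentz hN hA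
  have hbdd {t : ℝ} (ht : ∃ w ∈ Vm, v = ρ (N t) w) :
      IsBounded ((fun s => ρ (A s * N (-t)) v) '' Set.Ici 0) := by
    obtain ⟨w, hw, rfl⟩ := ht
    rw [hVm] at hw
    refine hw.subset ?_
    rintro _ ⟨s, hs, rfl⟩
    refine ⟨s, hs, ?_⟩
    change (ρ (A s * N (-t)) * ρ (N t)) w = _
    rw [← map_mul, hframe.n_neg, inv_mul_cancel_right]
  have hcard : 2 < ({-t₁, -t₂, -t₃} : Finset ℝ).card := by
    rw [Finset.card_eq_three.2 ⟨_, _, _, by simpa, by simpa, by simpa, rfl⟩]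
    norm_num
  intro g hg
  refine hframe.apply_eq_self_of_mem_closure
    (hρ.comp (continuous_of_lorAct_unipotent hN)) hcard ?_
    (connectedComponent_one_subset_closure hN hA hg)
  simpa [-map_mul] using ⟨hbdd hv1, hbdd hv2, hbdd hv3⟩
end
end

section
/- Let n ≥ 2. There is no coarse embedding from the Euclidean space ℝⁿ into the real hyperbolic space ℍⁿ, realized as the hyperboloid model: there is no map α : ℝⁿ → ℍⁿ together with nondecreasing functions φ⁻, φ⁺ : [0,∞) → ℝ tending to +∞ such that φ⁻(‖x − y‖) ≤ d_H(α(x), α(y)) ≤ φ⁺(‖x − y‖) for all x, y ∈ ℝⁿ. -/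
open Filter Set

noncomputable section

/-- The Minkowski bilinear form `B(x,y) = −x₀y₀ + x₁y₁ + ⋯ + xₙyₙ` on `ℝ^{n+1}`. -/
def minkB (n : ℕ) (x y : Fin (n + 1) → ℝ) : ℝ :=
  -(x 0 * y 0) + ∑ i : Fin (n + 1), if i ≠ 0 then x i * y i else 0

/-- The hyperboloid model of real hyperbolic `n`-space:
`ℍⁿ = {x ∈ ℝ^{n+1} : B(x,x) = −1, x₀ > 0}`. -/
def HypSet (n : ℕ) : Set (Fin (n + 1) → ℝ) := {x | minkB n x x = -1 ∧ 0 < x 0}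

/-- The inverse hyperbolic cosine, `arcosh x = log (x + √(x² − 1))`. -/
def arcosh (x : ℝ) : ℝ := Real.log (x + Real.sqrt (x ^ 2 - 1))

/-- The hyperbolic distance on the hyperboloid model: `d_H(x,y) = arcosh (−B(x,y))`. -/
def dHyp (n : ℕ) (x y : Fin (n + 1) → ℝ) : ℝ := arcosh (-(minkB n x y))

/-- A coarse embedding relatively to given distance functions `dX` and `dY`. -/
def IsCoarseEmbeddingWrt {X Y : Type*} (dX : X → X → ℝ) (dY : Y → Y → ℝ) (α : X → Y) : Prop :=
  ∃ φm φp : ℝ → ℝ,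
    MonotoneOn φm (Set.Ici 0) ∧ MonotoneOn φp (Set.Ici 0) ∧
    Tendsto φm atTop atTop ∧ Tendsto φp atTop atTop ∧
    ∀ x y : X, φm (dX x y) ≤ dY (α x) (α y) ∧ dY (α x) (α y) ≤ φp (dX x y)

/-! Suppose a grid `{0, …, N - 1}ⁿ` maps to hyperbolic space so that neighbours stay within bounded
distance while any two distinct points are far apart. Centre the image by minimizing
`∑ₓ log cosh d(u, f x)` over `u`: the criticality condition says that the images, seen in the Klein
ball model centred at `u`, sum to zero. Neighbouring points `x`, `y` are at Euclidean distance
`O(1 / cosh d(u, f x))` in this model, so the `L¹` Poincaré inequality on the grid bounds the sum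
of the norms, which is nearly `Nⁿ`, by `O(N ∑ₓ 1 / cosh d(u, f x))`. On the other hand the `f x` are
separated, so by a volume count in the ball only `O(hⁿ⁻¹)` of them have `cosh d(u, f x) ≈ h`; this
makes `∑ₓ 1 / cosh d(u, f x)` of smaller order than `Nⁿ⁻¹`, a contradiction for large `N`. -/

section Height

variable {E : Type*} [NormedAddCommGroup E]

/-- The height `√(1 + ‖v‖²)` of the point above `v` on the hyperboloid `a² = 1 + ‖v‖²`, `a > 0` in
`ℝ × E`. Hyperbolic space is parametrized by `v ∈ E`, so that its points carry no side condition. -/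
def hypHeight (v : E) : ℝ := √(1 + ‖v‖ ^ 2)

lemma hypHeight_sq (v : E) : hypHeight v ^ 2 = 1 + ‖v‖ ^ 2 := Real.sq_sqrt (by positivity)

lemma hypHeight_pos (v : E) : 0 < hypHeight v := Real.sqrt_pos.2 (by positivity)

lemma norm_lt_hypHeight (v : E) : ‖v‖ < hypHeight v :=
  Real.lt_sqrt_of_sq_lt (by linarith)

end Height

section Hyperboloid

open scoped InnerProductSpace

variable {E : Type*} [NormedAddCommGroup E] [InnerProductSpace ℝ E]

/-- The hyperbolic cosine of the hyperbolic distance between the points of the hyperboloid above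
`u` and `v`. -/
def coshDist (u v : E) : ℝ := hypHeight u * hypHeight v - ⟪u, v⟫_ℝ

/-- The vertical projection to `E` of the image of the point above `v` under the hyperbolic
translation that moves the point above `u` to the one above `0`. -/
def boost (u v : E) : E := v + (⟪u, v⟫_ℝ / (1 + hypHeight u) - hypHeight v) • u

/-- The point above `v` in the Klein (projective) ball model centred at the point above `u`: the
translate `boost u v` is divided by its height, which is `coshDist u v`. -/
def klein (u v : E) : E := (coshDist u v)⁻¹ • boost u v

/-- The gradient at `u` of the function `fun u ↦ Real.log (coshDist u v)` on the Euclidean space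
`E`. -/
def gradLogCoshDist (u v : E) : E :=
  (coshDist u v)⁻¹ • ((hypHeight v / hypHeight u) • u - v)

lemma coshDist_self (v : E) : coshDist v v = 1 := by
  rw [coshDist, real_inner_self_eq_norm_sq, ← sq, hypHeight_sq]
  ring

lemma one_le_coshDist (u v : E) : 1 ≤ coshDist u v := by
  have heights : 1 + ‖u‖ * ‖v‖ ≤ hypHeight u * hypHeight v := by
    refine le_of_sq_le_sq ?_ (mul_pos (hypHeight_pos u) (hypHeight_pos v)).le
    rw [mul_pow, hypHeight_sq, hypHeight_sq]
    linarith [two_mul_le_add_sq ‖u‖ ‖v‖]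
  rw [coshDist]
  linarith [real_inner_le_norm u v]

lemma coshDist_pos (u v : E) : 0 < coshDist u v := zero_lt_one.trans_le (one_le_coshDist u v)

lemma inner_boost_boost (u v w : E) :
    ⟪boost u v, boost u w⟫_ℝ = coshDist u v * coshDist u w - coshDist v w := by
  have norm_sq_u : ‖u‖ ^ 2 = hypHeight u ^ 2 - 1 := by rw [hypHeight_sq]; ring
  have denom_ne_zero : 1 + hypHeight u ≠ 0 := by linarith [hypHeight_pos u]
  simp only [boost, coshDist, inner_add_left, inner_add_right, inner_smul_left, inner_smul_right,
    real_inner_self_eq_norm_sq, norm_sq_u, real_inner_comm u v, conj_trivial]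
  field_simp
  ring

lemma inner_klein_klein (u v w : E) :
    ⟪klein u v, klein u w⟫_ℝ = 1 - coshDist v w / (coshDist u v * coshDist u w) := by
  have hv := (coshDist_pos u v).ne'
  have hw := (coshDist_pos u w).ne'
  rw [klein, klein, real_inner_smul_left, real_inner_smul_right, inner_boost_boost]
  field_simp

lemma norm_klein_sq (u v : E) : ‖klein u v‖ ^ 2 = 1 - (coshDist u v)⁻¹ ^ 2 := by
  rw [← real_inner_self_eq_norm_sq, inner_klein_klein, coshDist_self, one_div, ← sq, inv_pow]

lemma norm_klein_le_one (u v : E) : ‖klein u v‖ ≤ 1 := by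
  rw [← sq_le_one_iff₀ (norm_nonneg _), norm_klein_sq]
  linarith [sq_nonneg (coshDist u v)⁻¹]

lemma one_sub_inv_coshDist_le_norm_klein (u v : E) :
    1 - (coshDist u v)⁻¹ ≤ ‖klein u v‖ := by
  have inv_pos : 0 < (coshDist u v)⁻¹ := inv_pos.2 (coshDist_pos u v)
  have inv_le_one : (coshDist u v)⁻¹ ≤ 1 := inv_le_one_of_one_le₀ (one_le_coshDist u v)
  refine le_of_sq_le_sq ?_ (norm_nonneg _)
  rw [norm_klein_sq]
  nlinarith

lemma dist_klein_klein_sq (u v w : E) :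
    dist (klein u v) (klein u w) ^ 2 =
      2 * coshDist v w / (coshDist u v * coshDist u w)
        - (coshDist u v)⁻¹ ^ 2 - (coshDist u w)⁻¹ ^ 2 := by
  rw [dist_eq_norm, norm_sub_sq_real, norm_klein_sq, norm_klein_sq, inner_klein_klein]
  ring

lemma inv_coshDist_le_two_mul_mul_inv (u v w : E) :
    (coshDist u w)⁻¹ ≤ 2 * coshDist v w * (coshDist u v)⁻¹ := by
  refine le_of_mul_le_mul_right ?_ (inv_pos.2 (coshDist_pos u w))
  have dist_sq_eq := dist_klein_klein_sq u v w
  rw [div_eq_mul_inv, mul_inv, ← mul_assoc] at dist_sq_eq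
  linarith [sq_nonneg (dist (klein u v) (klein u w)), sq_nonneg (coshDist u v)⁻¹]

lemma dist_klein_klein_le (u v w : E) :
    dist (klein u v) (klein u w) ≤ 2 * coshDist v w * (coshDist u v)⁻¹ := by
  have hv := coshDist_pos u v
  have hvw := coshDist_pos v w
  refine le_of_sq_le_sq ?_ (by positivity)
  calc dist (klein u v) (klein u w) ^ 2
      ≤ 2 * coshDist v w * (coshDist u v)⁻¹ * (coshDist u w)⁻¹ := by
        rw [dist_klein_klein_sq, div_eq_mul_inv, mul_inv, ← mul_assoc]
        linarith [sq_nonneg (coshDist u v)⁻¹, sq_nonneg (coshDist u w)⁻¹]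
    _ ≤ 2 * coshDist v w * (coshDist u v)⁻¹ * (2 * coshDist v w * (coshDist u v)⁻¹) := by
        gcongr
        exact inv_coshDist_le_two_mul_mul_inv u v w
    _ = (2 * coshDist v w * (coshDist u v)⁻¹) ^ 2 := by ring

lemma two_div_le_dist_klein_klein {u v w : E} {h : ℝ} (hv : h ≤ coshDist u v)
    (hv' : coshDist u v < 2 * h) (hw : h ≤ coshDist u w) (hw' : coshDist u w < 2 * h)
    (hvw : 12 ≤ coshDist v w) : 2 / h ≤ dist (klein u v) (klein u w) := by
  have h_pos : 0 < h := by linarith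
  have hv_pos := coshDist_pos u v
  have hw_pos := coshDist_pos u w
  refine le_of_sq_le_sq ?_ dist_nonneg
  calc (2 / h) ^ 2 = 2 * 12 / ((2 * h) * (2 * h)) - h⁻¹ ^ 2 - h⁻¹ ^ 2 := by field_simp; norm_num
    _ ≤ 2 * coshDist v w / (coshDist u v * coshDist u w)
        - (coshDist u v)⁻¹ ^ 2 - (coshDist u w)⁻¹ ^ 2 := by gcongr
    _ = dist (klein u v) (klein u w) ^ 2 := (dist_klein_klein_sq u v w).symm

lemma klein_eq_neg_gradLogCoshDist (u v : E) :
    klein u v = -(gradLogCoshDist u v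
      + (⟪u, gradLogCoshDist u v⟫_ℝ / (1 + hypHeight u)) • u) := by
  have norm_sq_u : ‖u‖ ^ 2 = hypHeight u ^ 2 - 1 := by rw [hypHeight_sq]; ring
  have height_ne_zero := (hypHeight_pos u).ne'
  have denom_ne_zero : 1 + hypHeight u ≠ 0 := by linarith [hypHeight_pos u]
  have coshDist_ne_zero := (coshDist_pos u v).ne'
  simp only [klein, boost, gradLogCoshDist, inner_smul_right, inner_sub_right,
    real_inner_self_eq_norm_sq, norm_sq_u]
  match_scalars <;> field_simp
  ring

lemma hasFDerivAt_hypHeight (u : E) :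
    HasFDerivAt hypHeight ((hypHeight u)⁻¹ • innerSL ℝ u) u := by
  refine (((hasStrictFDerivAt_norm_sq u).hasFDerivAt.const_add 1).sqrt
    (by positivity)).congr_fderiv ?_
  rw [← Nat.cast_smul_eq_nsmul ℝ, smul_smul, hypHeight]
  congr 1
  field_simp
  norm_num

lemma hasFDerivAt_log_coshDist (u v : E) :
    HasFDerivAt (fun u' ↦ Real.log (coshDist u' v)) (innerSL ℝ (gradLogCoshDist u v)) u := by
  have inner_deriv : HasFDerivAt (fun u' ↦ ⟪u', v⟫_ℝ) (innerSL ℝ v) u := by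
    simp_rw [real_inner_comm v]
    exact (innerSL ℝ v).hasFDerivAt
  refine ((((hasFDerivAt_hypHeight u).mul_const (hypHeight v)).sub inner_deriv).log
    (coshDist_pos u v).ne').congr_fderiv ?_
  rw [gradLogCoshDist, map_smul, map_sub, map_smul, smul_smul, div_eq_mul_inv]
  rfl

lemma continuous_coshDist_left (v : E) : Continuous fun u ↦ coshDist u v := by
  unfold coshDist hypHeight
  fun_prop

lemma hypHeight_mul_sub_norm_le_coshDist (u v : E) :
    hypHeight u * (hypHeight v - ‖v‖) ≤ coshDist u v := by
  have inner_le : ⟪u, v⟫_ℝ ≤ hypHeight u * ‖v‖ :=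
    (real_inner_le_norm u v).trans (by gcongr; exact (norm_lt_hypHeight u).le)
  rw [coshDist, mul_sub]
  linarith

section FiniteDimensional

variable [FiniteDimensional ℝ E]

lemma tendsto_coshDist_cocompact (v : E) :
    Tendsto (fun u ↦ coshDist u v) (cocompact E) atTop := by
  have height_tendsto : Tendsto (hypHeight : E → ℝ) (cocompact E) atTop :=
    tendsto_atTop_mono (fun u ↦ (norm_lt_hypHeight u).le) (tendsto_norm_cocompact_atTop (E := E))
  exact tendsto_atTop_mono (fun u ↦ hypHeight_mul_sub_norm_le_coshDist u v)
    (height_tendsto.atTop_mul_const (sub_pos.2 (norm_lt_hypHeight v)))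

lemma exists_sum_gradLogCoshDist_eq_zero {ι : Type*} [Fintype ι] (v : ι → E) :
    ∃ u, ∑ x, gradLogCoshDist u (v x) = 0 := by
  rcases isEmpty_or_nonempty ι with _ | ⟨⟨x₀⟩⟩
  · simp
  have log_continuous (x : ι) : Continuous fun u ↦ Real.log (coshDist u (v x)) :=
    (continuous_coshDist_left (v x)).log fun u ↦ (coshDist_pos u (v x)).ne'
  have sum_tendsto : Tendsto (fun u ↦ ∑ x, Real.log (coshDist u (v x))) (cocompact E) atTop :=
    tendsto_atTop_mono
      (fun u ↦ Finset.single_le_sum (f := fun x ↦ Real.log (coshDist u (v x)))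
        (fun x _ ↦ Real.log_nonneg (one_le_coshDist u (v x))) (Finset.mem_univ x₀))
      (Real.tendsto_log_atTop.comp (tendsto_coshDist_cocompact (v x₀)))
  obtain ⟨u, u_min⟩ :=
    (continuous_finsetSum Finset.univ fun x _ ↦ log_continuous x).exists_forall_le sum_tendsto
  have deriv_eq_zero : ∑ x, innerSL ℝ (gradLogCoshDist u (v x)) = 0 :=
    IsLocalMin.hasFDerivAt_eq_zero (Eventually.of_forall u_min)
      (HasFDerivAt.fun_sum fun x _ ↦ hasFDerivAt_log_coshDist u (v x))
  refine ⟨u, ext_inner_right ℝ fun w ↦ ?_⟩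
  simpa [sum_inner] using DFunLike.congr_fun deriv_eq_zero w

lemma exists_sum_klein_eq_zero {ι : Type*} [Fintype ι] (v : ι → E) :
    ∃ u, ∑ x, klein u (v x) = 0 := by
  obtain ⟨u, hu⟩ := exists_sum_gradLogCoshDist_eq_zero v
  refine ⟨u, ?_⟩
  simp_rw [klein_eq_neg_gradLogCoshDist]
  rw [Finset.sum_neg_distrib, Finset.sum_add_distrib, ← Finset.sum_smul, ← Finset.sum_div,
    ← inner_sum, hu, inner_zero_right, zero_div, zero_smul, add_zero, neg_zero]

end FiniteDimensional

end Hyperboloid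

section Packing

open MeasureTheory Metric Module

variable {E ι : Type*} [NormedAddCommGroup E] [NormedSpace ℝ E] [FiniteDimensional ℝ E]
  [Nontrivial E]

lemma measureReal_addHaar_ball [MeasurableSpace E] [BorelSpace E] (μ : Measure E)
    [μ.IsAddHaarMeasure] (x : E) {r : ℝ} (hr : 0 ≤ r) :
    μ.real (ball x r) = r ^ finrank ℝ E * μ.real (ball 0 1) := by
  rw [measureReal_def, measureReal_def, Measure.addHaar_ball μ x hr, ENNReal.toReal_mul,
    ENNReal.toReal_ofReal (by positivity)]

lemma card_mul_pow_add_pow_le_pow_finrank {k : ι → E} {T : Finset ι} {r δ R : ℝ} (hδ : 0 ≤ δ)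
    (hrR : r ≤ R) (hR : 0 ≤ R) (inner_le : ∀ x ∈ T, r + δ ≤ ‖k x‖)
    (le_outer : ∀ x ∈ T, ‖k x‖ + δ ≤ R)
    (separated : (T : Set ι).Pairwise fun x y ↦ δ + δ ≤ dist (k x) (k y)) :
    T.card * δ ^ finrank ℝ E + max r 0 ^ finrank ℝ E ≤ R ^ finrank ℝ E := by
  borelize E
  let μ : Measure E := Measure.addHaar
  have balls_disjoint : (T : Set ι).PairwiseDisjoint fun x ↦ ball (k x) δ :=
    fun x hx y hy hxy ↦ ball_disjoint_ball (separated hx hy hxy)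
  have balls_disjoint_inner : Disjoint (⋃ x ∈ T, ball (k x) δ) (ball 0 (max r 0)) := by
    simp only [disjoint_iUnion_left]
    intro x hx
    rcases le_total r 0 with hr | hr
    · rw [max_eq_right hr, ball_zero]
      exact disjoint_empty _
    · refine ball_disjoint_ball ?_
      rw [dist_zero_right, max_eq_left hr, add_comm]
      exact inner_le x hx
  have balls_subset : (⋃ x ∈ T, ball (k x) δ) ∪ ball 0 (max r 0) ⊆ ball 0 R :=
    union_subset
      (iUnion₂_subset fun x hx ↦ ball_subset_ball' <| by
        rw [dist_zero_right, add_comm]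
        exact le_outer x hx)
      (ball_subset_ball (max_le hrR hR))
  have balls_finite : μ (⋃ x ∈ T, ball (k x) δ) ≠ ⊤ :=
    measure_ne_top_of_subset (subset_union_left.trans balls_subset) measure_ball_lt_top.ne
  have volume_le := measureReal_mono (μ := μ) balls_subset measure_ball_lt_top.ne
  rw [measureReal_union balls_disjoint_inner measurableSet_ball balls_finite
      measure_ball_lt_top.ne,
    measureReal_biUnion_finset balls_disjoint (fun _ _ ↦ measurableSet_ball)
      (fun _ _ ↦ measure_ball_lt_top.ne),
    Finset.sum_congr rfl fun x _ ↦ measureReal_addHaar_ball μ (k x) hδ,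
    measureReal_addHaar_ball μ 0 hR, measureReal_addHaar_ball μ 0 (le_max_right r 0),
    Finset.sum_const, nsmul_eq_mul, ← mul_assoc, ← add_mul] at volume_le
  refine le_of_mul_le_mul_right volume_le ?_
  exact ENNReal.toReal_pos (measure_ball_pos μ 0 one_pos).ne' measure_ball_lt_top.ne

lemma card_mul_pow_le_of_separated_shell {k : ι → E} {T : Finset ι} {δ : ℝ} (hδ : 0 < δ)
    (hδ_one : δ ≤ 1) (le_norm : ∀ x ∈ T, 1 - δ ≤ ‖k x‖) (norm_le : ∀ x ∈ T, ‖k x‖ ≤ 1)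
    (separated : (T : Set ι).Pairwise fun x y ↦ 2 * δ ≤ dist (k x) (k y)) :
    T.card * δ ^ (finrank ℝ E - 1) ≤ 3 * finrank ℝ E * 2 ^ (finrank ℝ E - 1) := by
  set d := finrank ℝ E
  have d_pos : 0 < d := finrank_pos
  set r := max (1 - 2 * δ) 0
  have r_nonneg : 0 ≤ r := le_max_right _ _
  have r_le : r ≤ 1 + δ := max_le (by linarith) (by linarith)
  have volume_le : T.card * δ ^ d + r ^ d ≤ (1 + δ) ^ d :=
    card_mul_pow_add_pow_le_pow_finrank hδ.le (by linarith) (by linarith)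
      (fun x hx ↦ by linarith [le_norm x hx]) (fun x hx ↦ by linarith [norm_le x hx])
      (fun x hx y hy hxy ↦ by linarith [separated hx hy hxy])
  have shell_volume_le : (1 + δ) ^ d - r ^ d ≤ 3 * δ * d * 2 ^ (d - 1) := by
    calc (1 + δ) ^ d - r ^ d ≤ |1 + δ - r| * d * max |1 + δ| |r| ^ (d - 1) :=
          (le_abs_self _).trans (abs_pow_sub_pow_le _ _ d)
      _ = (1 + δ - r) * d * (1 + δ) ^ (d - 1) := by
          rw [abs_of_nonneg (sub_nonneg.2 r_le), abs_of_nonneg r_nonneg,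
            abs_of_nonneg (by linarith : 0 ≤ 1 + δ), max_eq_left r_le]
      _ ≤ 3 * δ * d * 2 ^ (d - 1) := by
          have : 1 - 2 * δ ≤ r := le_max_left _ _
          gcongr <;> linarith
  refine le_of_mul_le_mul_right ?_ hδ
  calc T.card * δ ^ (d - 1) * δ = T.card * δ ^ d := by
        rw [mul_assoc, pow_sub_one_mul d_pos.ne']
    _ ≤ 3 * δ * d * 2 ^ (d - 1) := by linarith
    _ = 3 * d * 2 ^ (d - 1) * δ := by ring

end Packing

section Grid

variable {X : Type*} [PseudoMetricSpace X]

lemma dist_le_sum_of_dist_covBy_le {α : Type*} [LinearOrder α] [Fintype α] [SuccOrder α]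
    [IsSuccArchimedean α] {g : α → X} {e : α → ℝ} (e_nonneg : ∀ t, 0 ≤ e t)
    (dist_le : ∀ s t, s ⋖ t → dist (g s) (g t) ≤ e s) (a b : α) :
    dist (g a) (g b) ≤ ∑ t, e t := by
  wlog hab : a ≤ b generalizing a b
  · rw [dist_comm]
    exact this b a (le_of_not_ge hab)
  suffices partial_sum : dist (g a) (g b) ≤ ∑ t with t < b, e t from
    partial_sum.trans (Finset.sum_le_univ_sum_of_nonneg e_nonneg)
  induction hab using Succ.rec with
  | rfl => simpa using Finset.sum_nonneg fun t _ ↦ e_nonneg t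
  | succ b _ ih =>
    by_cases hb : IsMax b
    · rwa [Order.succ_eq_iff_isMax.2 hb]
    have filter_lt_succ : Finset.univ.filter (· < Order.succ b) =
        insert b (Finset.univ.filter (· < b)) := by
      ext t
      simp [Order.lt_succ_iff_of_not_isMax hb, le_iff_eq_or_lt]
    rw [filter_lt_succ, Finset.sum_insert (by simp)]
    linarith [dist_triangle (g a) (g b) (g (Order.succ b)),
      dist_le b _ (Order.covBy_succ_of_not_isMax hb)]

lemma cons_covBy_cons_of_head {α : Type*} [PartialOrder α] {n : ℕ} {a b : α} (hab : a ⋖ b)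
    (x : Fin n → α) : (Fin.cons a x : Fin (n + 1) → α) ⋖ Fin.cons b x :=
  Pi.covBy_iff.2 ⟨0, hab, fun j hj ↦ by
    obtain ⟨j, rfl⟩ := Fin.exists_succ_eq.2 hj
    rfl⟩

lemma cons_covBy_cons_of_tail {α : Type*} [PartialOrder α] {n : ℕ} (a : α) {x y : Fin n → α}
    (hxy : x ⋖ y) : (Fin.cons a x : Fin (n + 1) → α) ⋖ Fin.cons a y := by
  obtain ⟨i, hi, hij⟩ := Pi.covBy_iff.1 hxy
  refine Pi.covBy_iff.2 ⟨i.succ, hi, fun j hj ↦ ?_⟩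
  cases j using Fin.cases with
  | zero => rfl
  | succ j => exact hij j fun h ↦ hj (congrArg Fin.succ h)

lemma sum_fin_succ_fun {α M : Type*} [Fintype α] [AddCommMonoid M] {n : ℕ}
    (F : (Fin (n + 1) → α) → M) : ∑ x, F x = ∑ a, ∑ x', F (Fin.cons a x') := by
  rw [← (Fin.consEquiv fun _ ↦ α).sum_comp, Fintype.sum_prod_type]
  rfl

/- Move from `(a, x')` to `(b, y')` through `(b, x')`: the first step stays in a line, the second
in a slice of one dimension less. -/
theorem sum_sum_dist_le_of_dist_covBy_le {α : Type*} [LinearOrder α] [Fintype α] [SuccOrder α]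
    [IsSuccArchimedean α] (n : ℕ) {f : (Fin n → α) → X} {e : (Fin n → α) → ℝ}
    (e_nonneg : ∀ x, 0 ≤ e x) (dist_le : ∀ x y, x ⋖ y → dist (f x) (f y) ≤ e x) :
    ∑ x, ∑ y, dist (f x) (f y) ≤ n * (Fintype.card α : ℝ) ^ (n + 1) * ∑ x, e x := by
  induction n with
  | zero => simp
  | succ n ih =>
    set N := (Fintype.card α : ℝ)
    have line (x' : Fin n → α) (a b : α) :
        dist (f (Fin.cons a x')) (f (Fin.cons b x')) ≤ ∑ t, e (Fin.cons t x') :=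
      dist_le_sum_of_dist_covBy_le (g := fun t ↦ f (Fin.cons t x')) (fun t ↦ e_nonneg _)
        (fun s t hst ↦ dist_le _ _ (cons_covBy_cons_of_head hst x')) a b
    have slice (b : α) : ∑ x', ∑ y', dist (f (Fin.cons b x')) (f (Fin.cons b y')) ≤
        n * N ^ (n + 1) * ∑ x', e (Fin.cons b x') :=
      ih (fun x' ↦ e_nonneg _) fun x' y' h ↦ dist_le _ _ (cons_covBy_cons_of_tail b h)
    calc ∑ x, ∑ y, dist (f x) (f y)
        = ∑ a, ∑ x', ∑ b, ∑ y', dist (f (Fin.cons a x')) (f (Fin.cons b y')) := by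
          simp only [sum_fin_succ_fun]
      _ ≤ ∑ _a : α, ∑ x', ∑ b, ∑ y' : Fin n → α,
          (∑ t, e (Fin.cons t x') + dist (f (Fin.cons b x')) (f (Fin.cons b y'))) := by
          gcongr with a _ x' _ b _ y' _
          linarith [line x' a b,
            dist_triangle (f (Fin.cons a x')) (f (Fin.cons b x')) (f (Fin.cons b y'))]
      _ = N ^ (n + 2) * ∑ x', ∑ t, e (Fin.cons t x')
          + N * ∑ b, ∑ x', ∑ y', dist (f (Fin.cons b x')) (f (Fin.cons b y')) := by
          simp only [Finset.sum_add_distrib, Finset.sum_const, Finset.card_univ,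
            Fintype.card_pi_const, nsmul_eq_mul, ← Finset.mul_sum]
          rw [Finset.sum_comm (s := (Finset.univ : Finset (Fin n → α)))
            (f := fun x' b ↦ ∑ y', dist (f (Fin.cons b x')) (f (Fin.cons b y')))]
          push_cast
          ring
      _ ≤ N ^ (n + 2) * ∑ x', ∑ t, e (Fin.cons t x')
          + N * ∑ b, n * N ^ (n + 1) * ∑ x', e (Fin.cons b x') := by
          gcongr with b _
          exact slice b
      _ = (n + 1 : ℕ) * N ^ (n + 1 + 1) * ∑ x, e x := by
          rw [sum_fin_succ_fun, ← Finset.mul_sum, Finset.sum_comm]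
          push_cast
          ring

end Grid

lemma card_mul_sum_norm_le_sum_sum_dist {ι E : Type*} [Fintype ι] [NormedAddCommGroup E]
    [NormedSpace ℝ E] {k : ι → E} (sum_eq_zero : ∑ x, k x = 0) :
    Fintype.card ι * ∑ x, ‖k x‖ ≤ ∑ x, ∑ y, dist (k x) (k y) := by
  rw [Finset.mul_sum]
  gcongr with x
  calc Fintype.card ι * ‖k x‖ = ‖∑ y, (k x - k y)‖ := by
        rw [Finset.sum_sub_distrib, sum_eq_zero, sub_zero, Finset.sum_const, Finset.card_univ,
          ← Nat.cast_smul_eq_nsmul ℝ, norm_smul, Real.norm_natCast]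
    _ ≤ ∑ y, dist (k x) (k y) := by
        simp_rw [dist_eq_norm]
        exact norm_sum_le _ _

lemma exists_mul_lt_two_pow (A : ℝ) (p : ℕ) : ∃ q : ℕ, A * (q + p : ℕ) < 2 ^ q := by
  have ratio_tendsto : Tendsto (fun b : ℕ ↦ (b : ℝ) ^ 1 / 2 ^ b) atTop (nhds 0) :=
    tendsto_pow_const_div_const_pow_of_one_lt 1 one_lt_two
  have scaled_tendsto : Tendsto (fun q : ℕ ↦ A * 2 ^ p * (((q + p : ℕ) : ℝ) ^ 1 / 2 ^ (q + p)))
      atTop (nhds 0) := by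
    simpa using ((tendsto_add_atTop_iff_nat p).2 ratio_tendsto).const_mul (A * 2 ^ p)
  obtain ⟨q, hq⟩ := (scaled_tendsto.eventually_lt_const one_pos).exists
  refine ⟨q, ?_⟩
  rw [pow_one, pow_add, ← mul_div_assoc, div_lt_one (by positivity)] at hq
  exact lt_of_mul_lt_mul_right (by linarith) (by positivity : (0 : ℝ) ≤ 2 ^ p)

/- Take `2 ^ b = N * 2 ^ p` with `p` so large that the last term is at most half of the right-hand
side; then the first term is `O(N ^ k * log N)`. -/
lemma exists_mul_add_div_lt_pow {C : ℝ} (hC : 0 < C) (K : ℝ) (k : ℕ) :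
    ∃ N b : ℕ, 0 < N ∧
      C * (b * (K * (2 ^ b) ^ k) + (N : ℝ) ^ (k + 2) / 2 ^ b) < (N : ℝ) ^ (k + 1) := by
  obtain ⟨p, hp⟩ := pow_unbounded_of_one_lt (2 * C) (one_lt_two : (1 : ℝ) < 2)
  obtain ⟨q, hq⟩ := exists_mul_lt_two_pow (2 * C * K * (2 ^ p) ^ k) p
  refine ⟨2 ^ q, q + p, by positivity, ?_⟩
  push_cast at hq ⊢
  set N : ℝ := 2 ^ q
  set P : ℝ := 2 ^ p
  have N_pos : 0 < N := by positivity
  have first_lt : C * ((q + p) * (K * (2 ^ (q + p)) ^ k)) < N ^ (k + 1) / 2 := by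
    calc C * ((q + p) * (K * (2 ^ (q + p)) ^ k))
        = 2 * C * K * P ^ k * (q + p) * (N ^ k / 2) := by
          rw [pow_add, mul_pow]
          ring
      _ < N * (N ^ k / 2) := by gcongr
      _ = N ^ (k + 1) / 2 := by ring
  have second_le : C * (N ^ (k + 2) / 2 ^ (q + p)) ≤ N ^ (k + 1) / 2 := by
    rw [pow_add 2 q p, show C * (N ^ (k + 2) / (N * P)) = 2 * C / P * (N ^ (k + 1) / 2) by
      field_simp
      ring]
    refine mul_le_of_le_one_left (by positivity) ?_
    exact (div_le_one (by positivity)).2 hp.le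
  rw [mul_add]
  linarith

section Klein

open Module

variable {E : Type*} [NormedAddCommGroup E] [InnerProductSpace ℝ E]

lemma card_le_of_coshDist_shell [FiniteDimensional ℝ E] [Nontrivial E] {ι : Type*} {m : ℕ}
    (dim_le : finrank ℝ E ≤ m + 1) {f : ι → E} {u : E} {T : Finset ι} {h : ℝ} (one_le_h : 1 ≤ h)
    (shell : ∀ x ∈ T, h ≤ coshDist u (f x) ∧ coshDist u (f x) < 2 * h)
    (separated : (T : Set ι).Pairwise fun x y ↦ 12 ≤ coshDist (f x) (f y)) :
    T.card ≤ 3 * (m + 1) * 2 ^ m * h ^ m := by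
  have h_pos : 0 < h := by linarith
  have packing : T.card * h⁻¹ ^ (finrank ℝ E - 1) ≤
      3 * finrank ℝ E * 2 ^ (finrank ℝ E - 1) := by
    refine card_mul_pow_le_of_separated_shell (k := fun x ↦ klein u (f x)) (inv_pos.2 h_pos)
      (inv_le_one_of_one_le₀ one_le_h) (fun x hx ↦ ?_) (fun x _ ↦ norm_klein_le_one u (f x)) ?_
    · exact (sub_le_sub_left (inv_anti₀ h_pos (shell x hx).1) 1).trans
        (one_sub_inv_coshDist_le_norm_klein u (f x))
    · intro x hx y hy hxy
      exact two_div_le_dist_klein_klein (shell x hx).1 (shell x hx).2 (shell y hy).1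
        (shell y hy).2 (separated hx hy hxy)
  rw [inv_pow, ← div_eq_mul_inv, div_le_iff₀ (by positivity)] at packing
  have dim_le_cast : (finrank ℝ E : ℝ) ≤ m + 1 := by exact_mod_cast dim_le
  refine packing.trans ?_
  gcongr
  · norm_num
  · omega
  · omega

lemma inv_le_sum_shell_add_inv {c : ℝ} (hc : 1 ≤ c) (b : ℕ) :
    c⁻¹ ≤ ∑ j ∈ Finset.range b, (if 2 ^ j ≤ c ∧ c < 2 * 2 ^ j then (2 ^ j)⁻¹ else 0)
      + (2 ^ b)⁻¹ := by
  have summand_nonneg (j : ℕ) :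
      (0 : ℝ) ≤ if 2 ^ j ≤ c ∧ c < 2 * 2 ^ j then (2 ^ j)⁻¹ else 0 := by positivity
  rcases le_or_gt (2 ^ b) c with hb | hb
  · exact le_add_of_nonneg_of_le (Finset.sum_nonneg fun j _ ↦ summand_nonneg j)
      (inv_anti₀ (by positivity) hb)
  · obtain ⟨j, hj, hj'⟩ := exists_nat_pow_near hc one_lt_two
    have j_lt : j < b := (pow_lt_pow_iff_right₀ one_lt_two).1 (hj.trans_lt hb)
    rw [pow_succ'] at hj'
    calc c⁻¹ ≤ if 2 ^ j ≤ c ∧ c < 2 * 2 ^ j then (2 ^ j)⁻¹ else 0 := by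
          rw [if_pos ⟨hj, hj'⟩]
          exact inv_anti₀ (by positivity) hj
      _ ≤ ∑ j ∈ Finset.range b, if 2 ^ j ≤ c ∧ c < 2 * 2 ^ j then (2 ^ j)⁻¹ else 0 :=
          Finset.single_le_sum (f := fun j ↦ if 2 ^ j ≤ c ∧ c < 2 * 2 ^ j then (2 ^ j)⁻¹ else 0)
            (fun j _ ↦ summand_nonneg j) (Finset.mem_range.2 j_lt)
      _ ≤ _ := le_add_of_nonneg_right (by positivity)

lemma sum_inv_coshDist_le [FiniteDimensional ℝ E] [Nontrivial E] {ι : Type*} [Fintype ι] {m : ℕ}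
    (dim_le : finrank ℝ E ≤ m + 2) {f : ι → E}
    (separated : Pairwise fun x y ↦ 12 ≤ coshDist (f x) (f y)) (u : E) (b : ℕ) :
    ∑ x, (coshDist u (f x))⁻¹ ≤
      b * (3 * (m + 2) * 2 ^ (m + 1) * (2 ^ b) ^ m) + Fintype.card ι / 2 ^ b := by
  set K : ℝ := 3 * (m + 2) * 2 ^ (m + 1) with K_def
  let shell (j : ℕ) : Finset ι :=
    {x | 2 ^ j ≤ coshDist u (f x) ∧ coshDist u (f x) < 2 * 2 ^ j}
  have shell_card (j : ℕ) : (shell j).card ≤ K * (2 ^ j) ^ (m + 1) := by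
    refine (card_le_of_coshDist_shell (m := m + 1) dim_le (one_le_pow₀ one_le_two)
      (fun x hx ↦ (Finset.mem_filter.1 hx).2) (fun x _ y _ hxy ↦ separated hxy)).trans_eq ?_
    rw [K_def]
    push_cast
    ring
  have shell_sum (j : ℕ) (hj : j ∈ Finset.range b) :
      (shell j).card * (2 ^ j : ℝ)⁻¹ ≤ K * (2 ^ b) ^ m := by
    rw [← div_eq_mul_inv, div_le_iff₀ (by positivity)]
    calc ((shell j).card : ℝ) ≤ K * (2 ^ j) ^ m * 2 ^ j := by
          rw [mul_assoc, ← pow_succ]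
          exact shell_card j
      _ ≤ K * (2 ^ b) ^ m * 2 ^ j := by
          have : j ≤ b := (Finset.mem_range.1 hj).le
          gcongr
          exact one_le_two
  calc ∑ x, (coshDist u (f x))⁻¹
      ≤ ∑ x, (∑ j ∈ Finset.range b, (if 2 ^ j ≤ coshDist u (f x) ∧ coshDist u (f x) < 2 * 2 ^ j
          then (2 ^ j : ℝ)⁻¹ else 0) + (2 ^ b : ℝ)⁻¹) := by
        gcongr with x
        exact inv_le_sum_shell_add_inv (one_le_coshDist u (f x)) b
    _ = ∑ j ∈ Finset.range b, (shell j).card * (2 ^ j : ℝ)⁻¹ + Fintype.card ι / 2 ^ b := by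
        rw [Finset.sum_add_distrib, Finset.sum_comm]
        simp only [← Finset.sum_filter, Finset.sum_const, nsmul_eq_mul, Finset.card_univ,
          div_eq_mul_inv, shell]
    _ ≤ b * (K * (2 ^ b) ^ m) + Fintype.card ι / 2 ^ b := by
        gcongr
        exact (Finset.sum_le_card_nsmul _ _ _ shell_sum).trans_eq (by simp)

lemma pow_le_mul_sum_inv_coshDist {n N : ℕ} (N_pos : 0 < N) {f : (Fin n → Fin N) → E} {u : E}
    (centered : ∑ x, klein u (f x) = 0) {D : ℝ} (D_nonneg : 0 ≤ D)
    (coshDist_le : ∀ x y, x ⋖ y → coshDist (f x) (f y) ≤ D) :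
    (N : ℝ) ^ n ≤ (2 * n * D + 1) * (N * ∑ x, (coshDist u (f x))⁻¹) := by
  set S := ∑ x, (coshDist u (f x))⁻¹ with S_def
  have inv_nonneg (x) : 0 ≤ (coshDist u (f x))⁻¹ := inv_nonneg.2 (coshDist_pos u (f x)).le
  have S_nonneg : 0 ≤ S := Finset.sum_nonneg fun x _ ↦ inv_nonneg x
  have poincare : ∑ x, ∑ y, dist (klein u (f x)) (klein u (f y)) ≤
      n * (N : ℝ) ^ (n + 1) * ∑ x, 2 * D * (coshDist u (f x))⁻¹ := by
    simpa only [Fintype.card_fin] using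
      sum_sum_dist_le_of_dist_covBy_le n (f := fun x ↦ klein u (f x))
        (e := fun x ↦ 2 * D * (coshDist u (f x))⁻¹)
        (fun x ↦ mul_nonneg (by positivity) (inv_nonneg x))
        (fun x y hxy ↦ (dist_klein_klein_le u (f x) (f y)).trans <|
          mul_le_mul_of_nonneg_right (by linarith [coshDist_le x y hxy]) (inv_nonneg x))
  have norm_sum_ge : (N : ℝ) ^ n - S ≤ ∑ x, ‖klein u (f x)‖ := by
    calc (N : ℝ) ^ n - S = ∑ x, (1 - (coshDist u (f x))⁻¹) := by simp [S_def]
      _ ≤ ∑ x, ‖klein u (f x)‖ := by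
          gcongr with x
          exact one_sub_inv_coshDist_le_norm_klein u (f x)
  have card_mul_le : (N : ℝ) ^ n * (N ^ n - S) ≤ N ^ n * (2 * n * D * (N * S)) := by
    calc (N : ℝ) ^ n * (N ^ n - S) ≤ N ^ n * ∑ x, ‖klein u (f x)‖ := by gcongr
      _ ≤ ∑ x, ∑ y, dist (klein u (f x)) (klein u (f y)) := by
          simpa using card_mul_sum_norm_le_sum_sum_dist centered
      _ ≤ n * (N : ℝ) ^ (n + 1) * ∑ x, 2 * D * (coshDist u (f x))⁻¹ := poincare
      _ = N ^ n * (2 * n * D * (N * S)) := by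
          rw [← Finset.mul_sum]
          ring
  have sub_le : (N : ℝ) ^ n - S ≤ 2 * n * D * (N * S) :=
    le_of_mul_le_mul_left card_mul_le (by positivity)
  have S_le : S ≤ N * S := le_mul_of_one_le_left S_nonneg (by exact_mod_cast N_pos)
  linarith

theorem exists_grid_forall_exists_coshDist_lt [FiniteDimensional ℝ E] {m : ℕ}
    (dim_le : finrank ℝ E ≤ m + 2) {D : ℝ} (D_nonneg : 0 ≤ D) :
    ∃ N : ℕ, ∀ f : (Fin (m + 2) → Fin N) → E, (∀ x y, x ⋖ y → coshDist (f x) (f y) ≤ D) →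
      ∃ x y, x ≠ y ∧ coshDist (f x) (f y) < 12 := by
  rcases subsingleton_or_nontrivial E with _ | _
  · obtain ⟨x, y, x_ne_y⟩ := exists_pair_ne (Fin (m + 2) → Fin 2)
    refine ⟨2, fun f _ ↦ ⟨x, y, x_ne_y, ?_⟩⟩
    rw [Subsingleton.elim (f x) (f y), coshDist_self]
    norm_num
  set C : ℝ := 2 * (m + 2 : ℕ) * D + 1
  set K : ℝ := 3 * (m + 2) * 2 ^ (m + 1)
  obtain ⟨N, b, N_pos, hNb⟩ :=
    exists_mul_add_div_lt_pow (C := C) (by positivity) K m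
  refine ⟨N, fun f coshDist_le ↦ ?_⟩
  by_contra! separated
  obtain ⟨u, centered⟩ := exists_sum_klein_eq_zero f
  set S := ∑ x, (coshDist u (f x))⁻¹
  have lower : (N : ℝ) ^ (m + 2) ≤ C * (N * S) :=
    pow_le_mul_sum_inv_coshDist N_pos centered D_nonneg coshDist_le
  have upper : S ≤ b * (K * (2 ^ b) ^ m) + (N : ℝ) ^ (m + 2) / 2 ^ b := by
    simpa using sum_inv_coshDist_le dim_le (fun x y hxy ↦ separated x y hxy) u b
  refine hNb.not_ge (le_of_mul_le_mul_left ?_ (by positivity : (0 : ℝ) < N))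
  calc (N : ℝ) * N ^ (m + 1) = N ^ (m + 2) := by ring
    _ ≤ C * (N * S) := lower
    _ = N * (C * S) := by ring
    _ ≤ N * (C * (b * (K * (2 ^ b) ^ m) + (N : ℝ) ^ (m + 2) / 2 ^ b)) := by gcongr

end Klein

lemma le_cosh_of_arcosh_le {t r : ℝ} (ht : 1 ≤ t) (h : Real.arcosh t ≤ r) : t ≤ Real.cosh r := by
  rw [← Real.cosh_arcosh ht, Real.cosh_le_cosh]
  exact abs_le_abs_of_nonneg (Real.arcosh_nonneg ht) h

section HyperboloidModel

variable {d : ℕ} {x y : Fin (d + 1) → ℝ}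

/-- The coordinates `(x₁, …, x_d)` of `x ∈ ℝ^{1,d}`, which identify the hyperboloid with Euclidean
space. -/
def spatialPart (x : Fin (d + 1) → ℝ) : EuclideanSpace ℝ (Fin d) := WithLp.toLp 2 (Fin.tail x)

lemma minkB_eq_inner_spatialPart_sub (x y : Fin (d + 1) → ℝ) :
    minkB d x y = inner ℝ (spatialPart x) (spatialPart y) - x 0 * y 0 := by
  simp [minkB, spatialPart, Fin.tail, Fin.sum_univ_succ, PiLp.inner_apply, mul_comm]
  ring

lemma hypHeight_spatialPart (hx : x ∈ HypSet d) : hypHeight (spatialPart x) = x 0 := by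
  have mink_self : minkB d x x = -1 := hx.1
  rw [minkB_eq_inner_spatialPart_sub, real_inner_self_eq_norm_sq] at mink_self
  refine (sq_eq_sq₀ (hypHeight_pos _).le hx.2.le).1 ?_
  rw [hypHeight_sq]
  linarith

lemma dHyp_eq_arcosh_coshDist (hx : x ∈ HypSet d) (hy : y ∈ HypSet d) :
    dHyp d x y = Real.arcosh (coshDist (spatialPart x) (spatialPart y)) := by
  rw [coshDist, hypHeight_spatialPart hx, hypHeight_spatialPart hy, dHyp,
    minkB_eq_inner_spatialPart_sub, neg_sub]
  rfl

end HyperboloidModel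

section ScaledGrid

variable {n N : ℕ} {L : ℝ} {x y : Fin n → Fin N}

/-- The point `L • x` of `ℝⁿ`, for a point `x` of the grid `{0, …, N - 1}ⁿ`. -/
def scaledGrid (L : ℝ) (x : Fin n → Fin N) : EuclideanSpace ℝ (Fin n) :=
  WithLp.toLp 2 fun i ↦ L * (x i : ℕ)

lemma dist_scaledGrid_of_covBy (hL : 0 ≤ L) (hxy : x ⋖ y) :
    dist (scaledGrid L x) (scaledGrid L y) = L := by
  obtain ⟨i, hi, eq_of_ne⟩ := Pi.covBy_iff.1 hxy
  have succ_eq : (x i : ℕ) + 1 = y i := Nat.covBy_iff_add_one_eq.1 (Fin.covBy_iff.1 hi)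
  rw [EuclideanSpace.dist_eq, Finset.sum_eq_single i (fun j _ hj ↦ ?_) (by simp)]
  · simp [scaledGrid, ← succ_eq, mul_add, abs_of_nonneg hL, Real.sqrt_sq hL]
  · simp [scaledGrid, eq_of_ne j hj]

lemma le_dist_scaledGrid_of_ne (hL : 0 ≤ L) (hxy : x ≠ y) :
    L ≤ dist (scaledGrid L x) (scaledGrid L y) := by
  obtain ⟨i, hi⟩ := Function.ne_iff.1 hxy
  have one_le_dist : 1 ≤ dist (x i : ℕ) (y i : ℕ) :=
    Nat.pairwise_one_le_dist (Fin.val_injective.ne hi)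
  calc L ≤ L * dist (x i : ℕ) (y i : ℕ) := le_mul_of_one_le_right hL one_le_dist
    _ = dist (scaledGrid L x i) (scaledGrid L y i) := by
        simp [scaledGrid, Real.dist_eq, ← mul_sub, abs_mul, abs_of_nonneg hL, Nat.dist_eq]
    _ ≤ dist (scaledGrid L x) (scaledGrid L y) := by
        simpa only [dist_eq_norm, PiLp.sub_apply] using
          PiLp.norm_apply_le (scaledGrid L x - scaledGrid L y) i

end ScaledGrid

theorem no_coarseEmbedding_euclidean_into_hyperbolic_general {n d : ℕ} (hn : 2 ≤ n) (hd : d ≤ n)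
    (α : EuclideanSpace ℝ (Fin n) → {x : Fin (d + 1) → ℝ // x ∈ HypSet d}) {φm φp : ℝ → ℝ}
    (hφm : Tendsto φm atTop atTop)
    (hα : ∀ x y, φm (dist x y) ≤ dHyp d (α x).1 (α y).1 ∧
      dHyp d (α x).1 (α y).1 ≤ φp (dist x y)) : False := by
  obtain ⟨m, rfl⟩ := Nat.exists_eq_add_of_le' hn
  let v (z : EuclideanSpace ℝ (Fin (m + 2))) := spatialPart (α z).1
  have dHyp_eq (z w) : dHyp d (α z).1 (α w).1 = Real.arcosh (coshDist (v z) (v w)) :=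
    dHyp_eq_arcosh_coshDist (α z).2 (α w).2
  obtain ⟨L, L_nonneg, φm_large⟩ : ∃ L, 0 ≤ L ∧ ∀ r ≥ L, Real.arcosh 12 ≤ φm r := by
    obtain ⟨L, hL⟩ := eventually_atTop.1 (hφm.eventually_ge_atTop (Real.arcosh 12))
    exact ⟨max L 0, le_max_right L 0, fun r hr ↦ hL r ((le_max_left L 0).trans hr)⟩
  obtain ⟨N, hN⟩ := exists_grid_forall_exists_coshDist_lt
    (E := EuclideanSpace ℝ (Fin d)) (m := m) (by simpa using hd) (Real.cosh_pos (φp L)).le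
  have coshDist_le (x y : Fin (m + 2) → Fin N) (hxy : x ⋖ y) :
      coshDist (v (scaledGrid L x)) (v (scaledGrid L y)) ≤ Real.cosh (φp L) := by
    refine le_cosh_of_arcosh_le (one_le_coshDist _ _) ?_
    rw [← dHyp_eq]
    exact (hα _ _).2.trans_eq (congrArg φp (dist_scaledGrid_of_covBy L_nonneg hxy))
  obtain ⟨x, y, hxy, coshDist_lt⟩ := hN (fun x ↦ v (scaledGrid L x)) coshDist_le
  have arcosh_le := (φm_large _ (le_dist_scaledGrid_of_ne L_nonneg hxy)).trans (hα _ _).1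
  rw [dHyp_eq, Real.arcosh_le_arcosh (by norm_num) (coshDist_pos _ _)] at arcosh_le
  exact coshDist_lt.not_ge arcosh_le

/-- For `n ≥ 2`, there is no coarse embedding from Euclidean `ℝⁿ` into the real
hyperbolic space `ℍⁿ` (hyperboloid model, with distance `d_H(x,y) = arcosh(−B(x,y))`). -/
theorem no_coarseEmbedding_euclidean_into_hyperbolic (n : ℕ) (hn : 2 ≤ n) :
    ¬ ∃ α : EuclideanSpace ℝ (Fin n) → {x : Fin (n + 1) → ℝ // x ∈ HypSet n},
      IsCoarseEmbeddingWrt (fun x y => dist x y)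
        (fun x y => dHyp n x.1 y.1) α := by
  rintro ⟨α, φm, φp, -, -, hφm, -, hα⟩
  exact no_coarseEmbedding_euclidean_into_hyperbolic_general hn le_rfl α hφm hα
end
end

section
/- Let (X, d_X) and (Y, d_Y) be metric spaces such that X is quasi-geodesic, and X and Y are uniformly discrete and of bounded geometry, and let α : X → Y be a coarse embedding. If X has exponential growth, i.e. there exist x₀ ∈ X, c > 0 and r₀ ≥ 0 such that the closed ball B_X(x₀, r) has at least e^{c·r} points for every r ≥ r₀, then Y has exponential growth: there exist y₀ ∈ Y, c' > 0 and r₁ ≥ 0 such that the closed ball B_Y(y₀, r) has at least e^{c'·r} points for every r ≥ r₁. -/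
open Filter Metric Set Bornology

noncomputable section

/-- A coarse embedding between metric spaces: there are nondecreasing control functions
`φ⁻, φ⁺ : [0,∞) → ℝ` tending to `+∞` with
`φ⁻(d(x,y)) ≤ d(α x, α y) ≤ φ⁺(d(x,y))` for all `x, y`. -/
def IsCoarseEmbedding {X Y : Type*} [MetricSpace X] [MetricSpace Y] (α : X → Y) : Prop :=
  ∃ φm φp : ℝ → ℝ,
    MonotoneOn φm (Set.Ici 0) ∧ MonotoneOn φp (Set.Ici 0) ∧
    Tendsto φm atTop atTop ∧ Tendsto φp atTop atTop ∧
    ∀ x y : X, φm (dist x y) ≤ dist (α x) (α y) ∧ dist (α x) (α y) ≤ φp (dist x y)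

/-- A metric space is quasi-geodesic if there are `a, b > 0` such that any two points are joined
by an `(a,b)`-quasi-geodesic. -/
def QuasiGeodesicSpace (X : Type*) [MetricSpace X] : Prop :=
  ∃ a : ℝ, 0 < a ∧ ∃ b : ℝ, 0 < b ∧ ∀ x y : X, ∃ L : ℝ, 0 ≤ L ∧ ∃ γ : ℝ → X,
    γ 0 = x ∧ γ L = y ∧ ∀ t ∈ Set.Icc (0:ℝ) L, ∀ t' ∈ Set.Icc (0:ℝ) L,
      (1 / a) * |t - t'| - b ≤ dist (γ t) (γ t') ∧ dist (γ t) (γ t') ≤ a * |t - t'| + b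

/-- A metric space is uniformly discrete if distinct points are at distance at least `C > 0`. -/
def UniformlyDiscrete (X : Type*) [MetricSpace X] : Prop :=
  ∃ C : ℝ, 0 < C ∧ ∀ x y : X, x ≠ y → C ≤ dist x y

/-- A metric space has bounded geometry if for every `r > 0` there is `N` such that every closed
ball of radius `r` has at most `N` points. -/
def BoundedGeometry (X : Type*) [MetricSpace X] : Prop :=
  ∀ r : ℝ, 0 < r → ∃ N : ℕ, ∀ x : X,
    (Metric.closedBall x r).Finite ∧ (Metric.closedBall x r).ncard ≤ N

/-! Cut a quasi-geodesic of `X` into pieces of unit parameter length. A bornologous map moves the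
ends of each piece by a bounded amount, and the number of pieces is at most affine in the distance
travelled; hence the map is large-scale Lipschitz and sends the ball of radius `r` around `x₀` into
a ball of radius `A * r + B`. If no fibre has more than `N` points, the latter ball has at least a
fraction `1 / N` as many points as the former, and exponential growth survives both the factor `N`
and the affine change of radius.

The fibres of a coarse embedding are uniformly bounded in diameter, hence in cardinality when the
domain has bounded geometry. -/

section Maps

variable {X Y : Type*} [PseudoMetricSpace X] [PseudoMetricSpace Y]

/-- A map is bornologous if points at bounded distance have images at bounded distance. This is the
upper half of a coarse embedding. -/
def Bornologous (f : X → Y) : Prop :=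
  ∀ r : ℝ, ∃ s : ℝ, ∀ x y : X, dist x y ≤ r → dist (f x) (f y) ≤ s

/-- A map is effectively proper if points whose images are at bounded distance are at bounded
distance. This is the lower half of a coarse embedding. -/
def EffectivelyProper (f : X → Y) : Prop :=
  ∀ s : ℝ, ∃ r : ℝ, ∀ x y : X, dist (f x) (f y) ≤ s → dist x y ≤ r

/-- A map is large-scale Lipschitz if it expands distances by at most an affine function. The slope
is required to be positive so that this function can be inverted. -/
def LargeScaleLipschitz (f : X → Y) : Prop :=
  ∃ A : ℝ, 0 < A ∧ ∃ B : ℝ, ∀ x y : X, dist (f x) (f y) ≤ A * dist x y + B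

end Maps

/-- A map is uniformly finite-to-one if its fibres have a common finite bound on their cardinality.
It is expressed with `Set.encard`, so that infinite fibres are excluded. -/
def UniformlyFiniteToOne {X Y : Type*} (f : X → Y) : Prop :=
  ∃ N : ℕ, ∀ y : Y, (f ⁻¹' {y}).encard ≤ N

/-- A real function grows exponentially if it eventually dominates `r ↦ exp (c * r)` for some
`c > 0`. It is applied to the function counting the points of the balls around a point. -/
def ExponentiallyGrowing (u : ℝ → ℝ) : Prop :=
  ∃ c : ℝ, 0 < c ∧ ∀ᶠ r in atTop, Real.exp (c * r) ≤ u r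

theorem exponentiallyGrowing_iff_exists_nonneg {u : ℝ → ℝ} :
    ExponentiallyGrowing u ↔
      ∃ c r₀ : ℝ, 0 < c ∧ 0 ≤ r₀ ∧ ∀ r : ℝ, r₀ ≤ r → Real.exp (c * r) ≤ u r := by
  constructor
  · rintro ⟨c, hc, hu⟩
    obtain ⟨r₀, hr₀, hu⟩ := (atTop_basis' (0 : ℝ)).eventually_iff.1 hu
    exact ⟨c, r₀, hc, hr₀, fun r hr => hu hr⟩
  · rintro ⟨c, r₀, hc, -, hu⟩
    exact ⟨c, hc, eventually_atTop.2 ⟨r₀, hu⟩⟩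

theorem ExponentiallyGrowing.of_le_mul_comp_affine {u v : ℝ → ℝ} {A B K : ℝ}
    (hu : ExponentiallyGrowing u) (hA : 0 < A) (hK : 0 < K)
    (huv : ∀ r, u r ≤ K * v (A * r + B)) : ExponentiallyGrowing v := by
  obtain ⟨c, hc, hu⟩ := hu
  -- The rate in `s = A * r + B` is `c / A`; half of it is given up to absorb `K` and `B`.
  refine ⟨c / (2 * A), by positivity, ?_⟩
  have hradius : Tendsto (fun s => (s - B) / A) atTop atTop :=
    (tendsto_atTop_add_const_right _ (-B) tendsto_id).atTop_div_const hA
  filter_upwards [hradius.eventually hu,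
    eventually_ge_atTop ((Real.log K + c * B / A) / (c / (2 * A)))] with s hs hlarge
  have habsorb : Real.log K + c / (2 * A) * s ≤ c * ((s - B) / A) := by
    rw [div_le_iff₀ (by positivity)] at hlarge
    have hsplit : c * ((s - B) / A) = s * (c / (2 * A)) + c / (2 * A) * s - c * B / A := by
      field_simp
      ring
    linarith
  refine le_of_mul_le_mul_left ?_ hK
  calc K * Real.exp (c / (2 * A) * s)
      = Real.exp (Real.log K + c / (2 * A) * s) := by rw [Real.exp_add, Real.exp_log hK]
    _ ≤ Real.exp (c * ((s - B) / A)) := Real.exp_le_exp.2 habsorb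
    _ ≤ u ((s - B) / A) := hs
    _ ≤ K * v (A * ((s - B) / A) + B) := huv _
    _ = K * v s := by rw [mul_div_cancel₀ _ hA.ne', sub_add_cancel]

theorem ncard_le_mul_ncard_of_mapsTo {X Y : Type*} {f : X → Y} {s : Set X} {t : Set Y} {N : ℕ}
    (hst : MapsTo f s t) (ht : t.Finite) (hN : ∀ y ∈ t, (f ⁻¹' {y}).encard ≤ N) :
    s.ncard ≤ N * t.ncard := by
  have hcover : s ⊆ ⋃ y ∈ ht.toFinset, f ⁻¹' {y} := fun x hx =>
    mem_biUnion (ht.mem_toFinset.2 (hst hx)) rfl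
  have hencard : s.encard ≤ (N * t.ncard : ℕ) := by
    calc s.encard ≤ (⋃ y ∈ ht.toFinset, f ⁻¹' {y}).encard := encard_le_encard hcover
      _ ≤ ∑ y ∈ ht.toFinset, (f ⁻¹' {y}).encard := Finset.set_encard_biUnion_le _ _
      _ ≤ ht.toFinset.card • (N : ℕ∞) :=
        Finset.sum_le_card_nsmul _ _ _ fun y hy => hN y (ht.mem_toFinset.1 hy)
      _ = (N * t.ncard : ℕ) := by
        rw [ncard_eq_toFinset_card t ht, nsmul_eq_mul, Nat.cast_mul, mul_comm]
  exact ENat.toNat_le_of_le_natCast hencard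

theorem BoundedGeometry.finite_closedBall {X : Type*} [MetricSpace X] (hX : BoundedGeometry X)
    (x : X) (r : ℝ) : (closedBall x r).Finite := by
  obtain ⟨_, hN⟩ := hX (max r 1) (by positivity)
  exact (hN x).1.subset (closedBall_subset_closedBall (le_max_left r 1))

theorem EffectivelyProper.uniformlyFiniteToOne {X Y : Type*} [MetricSpace X] [PseudoMetricSpace Y]
    {f : X → Y} (hf : EffectivelyProper f) (hX : BoundedGeometry X) : UniformlyFiniteToOne f := by
  obtain ⟨r, hr⟩ := hf 0
  obtain ⟨N, hN⟩ := hX (max r 1) (by positivity)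
  refine ⟨N, fun y => ?_⟩
  obtain hempty | ⟨z, hz⟩ := (f ⁻¹' {y}).eq_empty_or_nonempty
  · simp [hempty]
  · have hfib : f ⁻¹' {y} ⊆ closedBall z (max r 1) := fun x hx =>
      (hr x z (by rw [mem_singleton_iff.1 hx, mem_singleton_iff.1 hz, dist_self])).trans
        (le_max_left r 1)
    calc (f ⁻¹' {y}).encard ≤ (closedBall z (max r 1)).encard := encard_le_encard hfib
      _ = (closedBall z (max r 1)).ncard := ((hN z).1.cast_ncard_eq).symm
      _ ≤ N := Nat.cast_le.2 (hN z).2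

namespace IsCoarseEmbedding

variable {X Y : Type*} [MetricSpace X] [MetricSpace Y] {f : X → Y}

theorem bornologous (hf : IsCoarseEmbedding f) : Bornologous f := by
  obtain ⟨_, φp, -, hmono, -, -, hφ⟩ := hf
  exact fun r => ⟨φp r, fun x y hxy =>
    (hφ x y).2.trans (hmono dist_nonneg (dist_nonneg.trans hxy) hxy)⟩

theorem effectivelyProper (hf : IsCoarseEmbedding f) : EffectivelyProper f := by
  obtain ⟨φm, _, -, -, htendsto, -, hφ⟩ := hf
  intro s
  obtain ⟨r, hr⟩ := eventually_atTop.1 (htendsto.eventually_gt_atTop s)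
  refine ⟨r, fun x y hxy => ?_⟩
  contrapose! hxy
  exact (hr _ hxy.le).trans_le (hφ x y).1

end IsCoarseEmbedding

theorem dist_le_ceil_mul_of_unit_steps {Y : Type*} [PseudoMetricSpace Y] {p : ℝ → Y} {L M : ℝ}
    (hL : 0 ≤ L)
    (hp : ∀ t ∈ Icc 0 L, ∀ t' ∈ Icc 0 L, |t - t'| ≤ 1 → dist (p t) (p t') ≤ M) :
    dist (p 0) (p L) ≤ ⌈L⌉₊ * M := by
  have hmem (k : ℕ) : min (k : ℝ) L ∈ Icc 0 L := ⟨le_min k.cast_nonneg hL, min_le_right _ _⟩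
  have hstep (k : ℕ) : dist (p (min (k : ℝ) L)) (p (min ((k + 1 : ℕ) : ℝ) L)) ≤ M :=
    hp _ (hmem k) _ (hmem (k + 1)) <|
      (abs_min_sub_min_le_max _ _ _ _).trans (by simp)
  have hchain := dist_le_range_sum_of_dist_le (f := fun k : ℕ => p (min (k : ℝ) L)) ⌈L⌉₊
    fun _ => hstep _
  simpa [min_eq_left hL, min_eq_right (Nat.le_ceil L)] using hchain

theorem Bornologous.largeScaleLipschitz {X Y : Type*} [MetricSpace X] [PseudoMetricSpace Y]
    {f : X → Y} (hf : Bornologous f) (hX : QuasiGeodesicSpace X) : LargeScaleLipschitz f := by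
  obtain ⟨a, ha, b, -, hX⟩ := hX
  obtain ⟨s, hs⟩ := hf (a + b)
  set M := max s 1
  have hM : 0 < M := lt_max_of_lt_right one_pos
  refine ⟨a * M, mul_pos ha hM, (a * b + 1) * M, fun x y => ?_⟩
  obtain ⟨L, hL, γ, rfl, rfl, hγ⟩ := hX x y
  have hunit : ∀ t ∈ Icc 0 L, ∀ t' ∈ Icc 0 L, |t - t'| ≤ 1 → dist (f (γ t)) (f (γ t')) ≤ M := by
    intro t ht t' ht' htt'
    have hγtt' : dist (γ t) (γ t') ≤ a + b :=
      (hγ t ht t' ht').2.trans (by gcongr; exact mul_le_of_le_one_right ha.le htt')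
    exact (hs _ _ hγtt').trans (le_max_left s 1)
  have hlength : L ≤ a * (dist (γ 0) (γ L) + b) := by
    have hlower := (hγ 0 (left_mem_Icc.2 hL) L (right_mem_Icc.2 hL)).1
    rw [zero_sub, abs_neg, abs_of_nonneg hL, sub_le_iff_le_add, one_div_mul_eq_div] at hlower
    exact (div_le_iff₀' ha).1 hlower
  calc dist (f (γ 0)) (f (γ L)) ≤ ⌈L⌉₊ * M := dist_le_ceil_mul_of_unit_steps hL hunit
    _ ≤ (L + 1) * M := by gcongr; exact (Nat.ceil_lt_add_one hL).le
    _ ≤ (a * (dist (γ 0) (γ L) + b) + 1) * M := by gcongr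
    _ = a * M * dist (γ 0) (γ L) + (a * b + 1) * M := by ring

theorem exponential_growth_of_coarseEmbedding_general
    {X Y : Type*} [MetricSpace X] [PseudoMetricSpace Y]
    (hX : QuasiGeodesicSpace X) (hY : ∀ (y : Y) (r : ℝ), (closedBall y r).Finite)
    {f : X → Y} (hf : Bornologous f) (hfib : UniformlyFiniteToOne f)
    (hgrowth : ∃ (x₀ : X) (c r₀ : ℝ), 0 < c ∧ 0 ≤ r₀ ∧
      ∀ r : ℝ, r₀ ≤ r → Real.exp (c * r) ≤ ((closedBall x₀ r).ncard : ℝ)) :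
    ∃ (y₀ : Y) (c' r₁ : ℝ), 0 < c' ∧ 0 ≤ r₁ ∧
      ∀ r : ℝ, r₁ ≤ r → Real.exp (c' * r) ≤ ((closedBall y₀ r).ncard : ℝ) := by
  obtain ⟨x₀, hgrowth⟩ := hgrowth
  obtain ⟨A, hA, B, hAB⟩ := hf.largeScaleLipschitz hX
  obtain ⟨N, hN⟩ := hfib
  have hN_pos : 0 < N := by
    have hfib_pos : 0 < (f ⁻¹' {f x₀}).encard := encard_pos.2 ⟨x₀, rfl⟩
    exact_mod_cast hfib_pos.trans_le (hN (f x₀))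
  have hballs (r : ℝ) : MapsTo f (closedBall x₀ r) (closedBall (f x₀) (A * r + B)) :=
    fun x hx => (hAB x x₀).trans (by gcongr; exact hx)
  have hcount (r : ℝ) :
      ((closedBall x₀ r).ncard : ℝ) ≤ N * (closedBall (f x₀) (A * r + B)).ncard := by
    exact_mod_cast ncard_le_mul_ncard_of_mapsTo (hballs r) (hY _ _) fun y _ => hN y
  exact ⟨f x₀, exponentiallyGrowing_iff_exists_nonneg.1 <|
    (exponentiallyGrowing_iff_exists_nonneg.2 hgrowth).of_le_mul_comp_affine
      (v := fun s => ((closedBall (f x₀) s).ncard : ℝ)) hA (Nat.cast_pos.2 hN_pos) hcount⟩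

/-- Under the standing assumptions (X quasi-geodesic, X and Y uniformly
discrete of bounded geometry, `α` a coarse embedding), if `X` has exponential growth then so
does `Y`. -/
theorem exponential_growth_of_coarseEmbedding
    {X Y : Type*} [MetricSpace X] [MetricSpace Y]
    (hqg : QuasiGeodesicSpace X)
    (hudX : UniformlyDiscrete X) (hudY : UniformlyDiscrete Y)
    (hbgX : BoundedGeometry X) (hbgY : BoundedGeometry Y)
    (α : X → Y) (hα : IsCoarseEmbedding α)
    (hX : ∃ (x₀ : X) (c r₀ : ℝ), 0 < c ∧ 0 ≤ r₀ ∧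
      ∀ r : ℝ, r₀ ≤ r → Real.exp (c * r) ≤ ((Metric.closedBall x₀ r).ncard : ℝ)) :
    ∃ (y₀ : Y) (c' r₁ : ℝ), 0 < c' ∧ 0 ≤ r₁ ∧
      ∀ r : ℝ, r₁ ≤ r → Real.exp (c' * r) ≤ ((Metric.closedBall y₀ r).ncard : ℝ) := by
  exact exponential_growth_of_coarseEmbedding_general hqg hbgY.finite_closedBall hα.bornologous
    (hα.effectivelyProper.uniformlyFiniteToOne hbgX) hX
end
end
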